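/- arXiv:1905.03588 — 3 statements merged into one kernel-verified Lean document; each statement's English description precedes it below -/
import Mathlib

section
/- Every discrete reachability bidding game with random-based tie-breaking is determined: for every configuration c, val1(G,c) = val2(G,c), where the values are taken over pure strategies. -/
/-! The value is obtained by backward induction, the point being that every one-round bidding
game has a saddle point in pure actions.

Fix a vertex and Player 1's budget `x`. Suppose the values `f` of the successor configurations are
monotone in Player 1's budget. If Player 1 wins the bidding with bid `b` the outcome is `p b`, the
largest successor value at budget `x - b`; if Player 2 wins with bid `b` it is `q b`, the smallest
successor value at budget `x + b`. A tie gives the average. Extending by `p b = 0` and `q b = ⊤` on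
unaffordable bids, `p` is antitone, `q` is monotone and `q 0 ≤ p 0`. At the last bid `m` before the
two curves cross, both players may restrict to the bids `m` and `m + 1`, and the value is the
median of `p (m + 1)`, `q (m + 1)` and `(p m + q m) / 2` (`exists_saddle`). The outcome is pointwise
monotone in `(p, q)`, hence monotonicity in the budget passes to the next stage (`op_mono_right`).

Let `val G n` be the value of reaching the target within `n` rounds. Player 1 guarantees
`val G n` for every `n` (`val_le_prob`). Since Player 2 has finitely many actions, some action is
good against `val G n` for infinitely many `n`, hence for all `n` by monotonicity in `n`, hence
against the supremum `⨆ n, val G n` (`exists_act2_sup`). Repeating these actions, Player 2 makes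
the supremum a supermartingale along the play, and so keeps the winning probability below it
(`prob_le_sup`). The link between `μ` and the recursively computed probability `prob` is
`measure_cyl_reach`, which conditions on the ties already resolved. -/

/-! # Discrete reachability bidding games with random-based tie-breaking -/

namespace RBid

open MeasureTheory

/-- A discrete reachability bidding game with random-based tie-breaking: a
finite directed graph in which every vertex has an outgoing edge, a total
budget `N`, and a target set for Player 1 (Player 1 is `0 : Fin 2`, Player 2
is `1 : Fin 2`). -/
structure Game (V : Type) where
  E : V → V → Prop
  succ_exists : ∀ v, ∃ u, E v u
  N : ℕ
  target : Set V

/-- A configuration: token position and the two budgets. -/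
structure Conf (V : Type) where
  v : V
  B1 : ℕ
  B2 : ℕ

/-- A round as recorded in histories: configuration, the two bids, and the
winner of the bidding. -/
abbrev Round (V : Type) := Conf V × ℕ × ℕ × Fin 2

abbrev Hist (V : Type) := List (Round V)

/-- A pure strategy: a bid for each history and configuration, and a successor
choice upon winning a bidding. -/
structure Strat (V : Type) where
  bid : Hist V → Conf V → ℕ
  move : Hist V → Conf V → ℕ → ℕ → V

def Legal {V : Type} (G : Game V) (i : Fin 2) (σ : Strat V) : Prop :=
  (∀ h c, σ.bid h c ≤ (if i = 0 then c.B1 else c.B2)) ∧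
  (∀ h c b1 b2, G.E c.v (σ.move h c b1 b2))

/-- One round of the play: `ω k` resolves the `k`-th tie (the third component
of the state counts the ties seen so far). -/
def stepPlay {V : Type} (G : Game V) (σ1 σ2 : Strat V) (ω : ℕ → Fin 2)
    (p : Hist V × Conf V × ℕ) : Hist V × Conf V × ℕ :=
  let h := p.1
  let c := p.2.1
  let k := p.2.2
  let b1 := σ1.bid h c
  let b2 := σ2.bid h c
  let w : Fin 2 := if b2 < b1 then 0 else if b1 < b2 then 1 else ω k
  let d := if w = 0 then σ1.move h c b1 b2 else σ2.move h c b1 b2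
  let c' : Conf V :=
    if w = 0 then ⟨d, c.B1 - b1, c.B2 + b1⟩ else ⟨d, c.B1 + b2, c.B2 - b2⟩
  (h ++ [(c, b1, b2, w)], c', if b1 = b2 then k + 1 else k)

def playAux {V : Type} (G : Game V) (σ1 σ2 : Strat V) (ω : ℕ → Fin 2)
    (c0 : Conf V) : ℕ → Hist V × Conf V × ℕ
  | 0 => ([], c0, 0)
  | n + 1 => stepPlay G σ1 σ2 ω (playAux G σ1 σ2 ω c0 n)

/-- The vertex path of the play of `σ1` against `σ2` from `c0`, with ties
resolved by `ω`. -/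
def path {V : Type} (G : Game V) (σ1 σ2 : Strat V) (ω : ℕ → Fin 2)
    (c0 : Conf V) (n : ℕ) : V :=
  (playAux G σ1 σ2 ω c0 n).2.1.v

/-- Player 1 wins the play determined by `σ1, σ2, ω` from `c0`: the vertex
path visits the target. -/
def Wins {V : Type} (G : Game V) (σ1 σ2 : Strat V) (ω : ℕ → Fin 2)
    (c0 : Conf V) : Prop :=
  ∃ n, path G σ1 σ2 ω c0 n ∈ G.target

/-- `μ` is the fair Bernoulli product measure on `{1,2}^ℕ` (here `Fin 2`-valued
sequences, whose `k`-th entry resolves the `k`-th tie): the measure of every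
cylinder constraining finitely many coordinates is `(1/2)^(number of
constrained coordinates)`. -/
def IsCoin (μ : Measure (ℕ → Fin 2)) : Prop :=
  ∀ (s : Finset ℕ) (f : ℕ → Fin 2),
    μ {ω | ∀ k ∈ s, ω k = f k} = (1 / 2 : ENNReal) ^ s.card

/-- The probability that Player 1 wins the game from `c` when the players use
the pure strategies `σ1, σ2` and ties are resolved by independent fair coin
flips (`μ` being the fair Bernoulli product measure). -/
noncomputable def Pr {V : Type} (μ : Measure (ℕ → Fin 2)) (G : Game V)
    (σ1 σ2 : Strat V) (c : Conf V) : ENNReal :=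
  μ {ω | Wins G σ1 σ2 ω c}

/-- `val1`: the value Player 1 can guarantee when revealing his pure strategy
first. -/
noncomputable def val1 {V : Type} (μ : Measure (ℕ → Fin 2)) (G : Game V)
    (c : Conf V) : ENNReal :=
  ⨆ σ1 : {σ : Strat V // Legal G 0 σ}, ⨅ σ2 : {σ : Strat V // Legal G 1 σ},
    Pr μ G σ1.1 σ2.1 c

/-- `val2`: the value when Player 2 reveals his pure strategy first. -/
noncomputable def val2 {V : Type} (μ : Measure (ℕ → Fin 2)) (G : Game V)
    (c : Conf V) : ENNReal :=
  ⨅ σ2 : {σ : Strat V // Legal G 1 σ}, ⨆ σ1 : {σ : Strat V // Legal G 0 σ},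
    Pr μ G σ1.1 σ2.1 c

/-- `G` is played on a DAG with sinks `t1` (the target) and `t2`: the only
outgoing edges of `t1` and `t2` are self-loops, no other vertex lies on a
cycle, and the target set is `{t1}`. -/
def IsDAG {V : Type} (G : Game V) (t1 t2 : V) : Prop :=
  (∀ u, G.E t1 u ↔ u = t1) ∧ (∀ u, G.E t2 u ↔ u = t2) ∧ t1 ≠ t2 ∧
    (∀ v, v ≠ t1 → v ≠ t2 → ¬ Relation.TransGen G.E v v) ∧
    G.target = {t1}

end RBid

namespace RBid

open MeasureTheory

/-! ### One round of bidding -/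

/-- The outcome of one round when `p b`, resp. `q b`, is what results from Player 1, resp.
Player 2, winning the bidding with bid `b`; ties give the average. -/
noncomputable def mat (p q : ℕ → ENNReal) (b1 b2 : ℕ) : ENNReal :=
  if b2 < b1 then p b1 else if b1 < b2 then q b2 else (p b1 + q b2) / 2

lemma le_avg {a b : ENNReal} (h : a ≤ b) : a ≤ (a + b) / 2 := by
  rw [ENNReal.le_div_iff_mul_le (by simp) (by simp), mul_two]
  gcongr

lemma avg_le {a b : ENNReal} (h : a ≤ b) : (a + b) / 2 ≤ b := by
  refine ENNReal.div_le_of_le_mul ?_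
  rw [mul_two]
  gcongr

lemma mat_mono {p q p' q' : ℕ → ENNReal} {b1 b2 : ℕ} (hp : p b1 ≤ p' b1) (hq : q b2 ≤ q' b2) :
    mat p q b1 b2 ≤ mat p' q' b1 b2 := by
  unfold mat
  split_ifs
  · exact hp
  · exact hq
  · gcongr

/-- The one-round game has a saddle point in affordable bids: Player 1's bid `b1` and Player 2's
bid `b2` guarantee the same amount. -/
lemma exists_saddle {p q : ℕ → ENNReal} {x y : ℕ} (hp : Antitone p) (hq : Monotone q)
    (h0 : q 0 ≤ p 0) (hx : ∀ b, x < b → p b = 0) (hy : ∀ b, y < b → q b = ⊤) :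
    ∃ b1 ≤ x, ∃ b2 ≤ y, ∀ b1' b2', mat p q b1' b2 ≤ mat p q b1 b2' := by
  classical
  have hex : ∃ m, p (m + 1) ≤ q (m + 1) := ⟨x, by rw [hx _ (Nat.lt_succ_self x)]; exact zero_le⟩
  obtain ⟨m, hm, hmin⟩ : ∃ m, p (m + 1) ≤ q (m + 1) ∧ ∀ k < m, ¬ p (k + 1) ≤ q (k + 1) :=
    ⟨Nat.find hex, Nat.find_spec hex, fun k hk => Nat.find_min hex hk⟩
  -- Strictness before the crossing is what makes `m` affordable for both players.
  have hstrict : m = 0 ∨ q m < p m := by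
    rcases m with _ | k
    · exact Or.inl rfl
    · exact Or.inr (not_le.1 (hmin k (Nat.lt_succ_self k)))
  have hqp : q m ≤ p m := by
    rcases hstrict with h | h
    · rw [h]; exact h0
    · exact h.le
  have hmx : m ≤ x := by
    rcases hstrict with h | h
    · omega
    · by_contra hc
      rw [hx m (by omega)] at h
      exact not_lt_zero h
  have hmy : m ≤ y := by
    rcases hstrict with h | h
    · omega
    · by_contra hc
      rw [hy m (by omega)] at h
      exact not_top_lt h
  set a := (p m + q m) / 2 with ha
  have ha1 : q m ≤ a := by rw [ha, add_comm]; exact le_avg hqp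
  have ha2 : a ≤ p m := by rw [ha, add_comm]; exact avg_le hqp
  have hc1 : p (m + 1) ≤ (p (m + 1) + q (m + 1)) / 2 := le_avg hm
  have hc2 : (p (m + 1) + q (m + 1)) / 2 ≤ q (m + 1) := avg_le hm
  have row0 : ∀ b, min a (q (m + 1)) ≤ mat p q m b := by
    intro b
    unfold mat
    split_ifs with h1 h2
    · exact (min_le_left _ _).trans ha2
    · exact (min_le_right _ _).trans (hq h2)
    · obtain rfl : b = m := by omega
      exact min_le_left _ _
  have row1 : ∀ b, p (m + 1) ≤ mat p q (m + 1) b := by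
    intro b
    unfold mat
    split_ifs with h1 h2
    · exact le_rfl
    · exact hm.trans (hq h2.le)
    · obtain rfl : b = m + 1 := by omega
      exact hc1
  have col0 : ∀ b, mat p q b m ≤ max a (p (m + 1)) := by
    intro b
    unfold mat
    split_ifs with h1 h2
    · exact (hp h1).trans (le_max_right _ _)
    · exact ha1.trans (le_max_left _ _)
    · obtain rfl : b = m := by omega
      exact le_max_left _ _
  have col1 : ∀ b, mat p q b (m + 1) ≤ q (m + 1) := by
    intro b
    unfold mat
    split_ifs with h1 h2
    · exact (hp h1.le).trans hm
    · exact le_rfl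
    · obtain rfl : b = m + 1 := by omega
      exact hc2
  have row : ∃ b1 ≤ x, ∀ b, max (p (m + 1)) (min a (q (m + 1))) ≤ mat p q b1 b := by
    by_cases h : m + 1 ≤ x
    · rcases le_total (p (m + 1)) (min a (q (m + 1))) with h' | h'
      · exact ⟨m, hmx, fun b => by rw [max_eq_right h']; exact row0 b⟩
      · exact ⟨m + 1, h, fun b => by rw [max_eq_left h']; exact row1 b⟩
    · refine ⟨m, hmx, fun b => ?_⟩
      rw [hx (m + 1) (by omega), max_eq_right zero_le]
      exact row0 b
  have col : ∃ b2 ≤ y, ∀ b, mat p q b b2 ≤ min (q (m + 1)) (max a (p (m + 1))) := by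
    by_cases h : m + 1 ≤ y
    · rcases le_total (q (m + 1)) (max a (p (m + 1))) with h' | h'
      · exact ⟨m + 1, h, fun b => by rw [min_eq_left h']; exact col1 b⟩
      · exact ⟨m, hmy, fun b => by rw [min_eq_right h']; exact col0 b⟩
    · refine ⟨m, hmy, fun b => ?_⟩
      rw [hy (m + 1) (by omega), min_eq_right le_top]
      exact col0 b
  obtain ⟨b1, hb1, h1⟩ := row
  obtain ⟨b2, hb2, h2⟩ := col
  refine ⟨b1, hb1, b2, hb2, fun c1 c2 => (h2 c1).trans (le_trans ?_ (h1 c2))⟩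
  -- Both bounds are the median of `a`, `p (m + 1)` and `q (m + 1)`.
  rcases le_total a (p (m + 1)) with h | h
  · exact (min_le_right _ _).trans ((max_eq_right h).le.trans (le_max_left _ _))
  · rw [max_eq_left h, min_comm]
    exact le_max_right _ _

/-! ### Backward induction -/

variable {V : Type}

/-- The best successor value for Player 1 after winning with bid `b` from budget `x`; `0` if the
bid is unaffordable. -/
noncomputable def up (G : Game V) (f : V → ℕ → ENNReal) (v : V) (x b : ℕ) : ENNReal :=
  if b ≤ x then ⨆ u : {u // G.E v u}, f u (x - b) else 0

/-- The best successor value for Player 2 after winning with bid `b` when Player 1's budget is `x`;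
`⊤` if the bid exceeds Player 2's budget `G.N - x`. -/
noncomputable def dn (G : Game V) (f : V → ℕ → ENNReal) (v : V) (x b : ℕ) : ENNReal :=
  if x + b ≤ G.N then ⨅ u : {u // G.E v u}, f u (x + b) else ⊤

/-- The value of one round at vertex `v` and Player 1 budget `x`, when the successor configurations
have values `f`. The bids range over all of `ℕ`; unaffordable ones are dominated. -/
noncomputable def op (G : Game V) (f : V → ℕ → ENNReal) (v : V) (x : ℕ) : ENNReal :=
  ⨆ b1, ⨅ b2, mat (up G f v x) (dn G f v x) b1 b2

open Classical in
/-- The value of reaching the target within `n` rounds from vertex `v` when Player 1's budget is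
`x` and Player 2's is `G.N - x`. -/
noncomputable def val (G : Game V) : ℕ → V → ℕ → ENNReal
  | 0, v, _ => if v ∈ G.target then 1 else 0
  | n + 1, v, x => if v ∈ G.target then 1 else op G (val G n) v x

lemma op_mono_left (G : Game V) {f g : V → ℕ → ENNReal} (h : ∀ v x, f v x ≤ g v x) (v : V)
    (x : ℕ) : op G f v x ≤ op G g v x := by
  refine iSup_mono fun b1 => iInf_mono fun b2 => mat_mono ?_ ?_
  · unfold up
    split_ifs
    · exact iSup_mono fun u => h _ _
    · exact le_rfl
  · unfold dn
    split_ifs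
    · exact iInf_mono fun u => h _ _
    · exact le_rfl

/-- A larger budget makes more bids affordable for Player 1, fewer for Player 2, and improves every
outcome. -/
lemma op_mono_right (G : Game V) {f : V → ℕ → ENNReal} (h : ∀ v, Monotone (f v)) (v : V) :
    Monotone (op G f v) := by
  intro x y hxy
  refine iSup_mono fun b1 => iInf_mono fun b2 => mat_mono ?_ ?_
  · unfold up
    split_ifs
    · exact iSup_mono fun u => h _ (by omega)
    · omega
    · exact zero_le
    · exact le_rfl
  · unfold dn
    split_ifs
    · exact iInf_mono fun u => h _ (by omega)
    · exact le_top
    · omega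
    · exact le_rfl

lemma val_mono_right (G : Game V) (n : ℕ) (v : V) : Monotone (val G n v) := by
  induction n generalizing v with
  | zero => intro x y _; exact le_rfl
  | succ n ih =>
    intro x y hxy
    unfold val
    split_ifs
    · exact le_rfl
    · exact op_mono_right G ih v hxy

lemma val_le_succ (G : Game V) (n : ℕ) (v : V) (x : ℕ) : val G n v x ≤ val G (n + 1) v x := by
  induction n generalizing v x with
  | zero =>
    unfold val
    split_ifs
    · exact le_rfl
    · exact zero_le
  | succ n ih =>
    rw [val, val]
    split_ifs
    · exact le_rfl
    · exact op_mono_left G ih v x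

lemma val_mono_left (G : Game V) (v : V) (x : ℕ) : Monotone fun n => val G n v x :=
  monotone_nat_of_le_succ fun n => val_le_succ G n v x

/-- The value `f` after one round from Player 1 budget `x` in which the players use the actions
`(b1, u1)` and `(b2, u2)`, averaged over the tie-breaking. -/
noncomputable def pay (f : V → ℕ → ENNReal) (x b1 b2 : ℕ) (u1 u2 : V) : ENNReal :=
  mat (fun b => f u1 (x - b)) (fun b => f u2 (x + b)) b1 b2

/-- The saddle point of `exists_saddle` in terms of actions, i.e. bids with successors. -/
lemma exists_act [Finite V] (G : Game V) {f : V → ℕ → ENNReal} (hf : ∀ v, Monotone (f v)) (v : V)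
    {x : ℕ} (hx : x ≤ G.N) :
    (∃ b1 u1, b1 ≤ x ∧ G.E v u1 ∧ ∀ b2 u2, b2 ≤ G.N - x → G.E v u2 →
      op G f v x ≤ pay f x b1 b2 u1 u2) ∧
    (∃ b2 u2, b2 ≤ G.N - x ∧ G.E v u2 ∧ ∀ b1 u1, b1 ≤ x → G.E v u1 →
      pay f x b1 b2 u1 u2 ≤ op G f v x) := by
  obtain ⟨w, hw⟩ := G.succ_exists v
  have : Nonempty {u // G.E v u} := ⟨⟨w, hw⟩⟩
  have hp : Antitone (up G f v x) := by
    intro a b hab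
    unfold up
    split_ifs
    · exact iSup_mono fun u => hf _ (by omega)
    · omega
    · exact zero_le
    · exact le_rfl
  have hq : Monotone (dn G f v x) := by
    intro a b hab
    unfold dn
    split_ifs
    · exact iInf_mono fun u => hf _ (by omega)
    · exact le_top
    · omega
    · exact le_rfl
  have h0 : dn G f v x 0 ≤ up G f v x 0 := by
    unfold dn up
    rw [if_pos (by omega), if_pos (by omega)]
    exact (iInf_le _ ⟨w, hw⟩).trans (le_iSup (fun u : {u // G.E v u} => f u (x - 0)) ⟨w, hw⟩)
  obtain ⟨b1, hb1, b2, hb2, hs⟩ := exists_saddle (x := x) (y := G.N - x) hp hq h0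
    (fun b hb => if_neg (by omega)) (fun b hb => if_neg (by omega))
  have hup : ∀ b ≤ x, ∀ u, G.E v u → f u (x - b) ≤ up G f v x b := by
    intro b hb u hu
    rw [up, if_pos hb]
    exact le_iSup (fun u : {u // G.E v u} => f u (x - b)) ⟨u, hu⟩
  have hdn : ∀ b ≤ G.N - x, ∀ u, G.E v u → dn G f v x b ≤ f u (x + b) := by
    intro b hb u hu
    rw [dn, if_pos (by omega)]
    exact iInf_le (fun u : {u // G.E v u} => f u (x + b)) ⟨u, hu⟩
  constructor
  · obtain ⟨⟨u1, hu1⟩, h1⟩ := exists_eq_ciSup_of_finite (f := fun u : {u // G.E v u} => f u (x - b1))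
    refine ⟨b1, u1, hb1, hu1, fun b2' u2 hb2' hu2 => ?_⟩
    have hA : op G f v x ≤ mat (up G f v x) (dn G f v x) b1 b2' :=
      iSup_le fun b1' => (iInf_le _ b2).trans (hs b1' b2')
    refine hA.trans (mat_mono ?_ (hdn _ hb2' _ hu2))
    rw [up, if_pos hb1]
    exact h1.ge
  · obtain ⟨⟨u2, hu2⟩, h2⟩ := exists_eq_ciInf_of_finite (f := fun u : {u // G.E v u} => f u (x + b2))
    refine ⟨b2, u2, hb2, hu2, fun b1' u1 hb1' hu1 => ?_⟩
    have hA : mat (up G f v x) (dn G f v x) b1' b2 ≤ op G f v x :=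
      le_iSup_of_le b1 (le_iInf fun b2' => hs b1' b2')
    refine le_trans (mat_mono (hup _ hb1' _ hu1) ?_) hA
    rw [dn, if_pos (by omega)]
    exact h2.le

/-- Player 2 has an action that does not increase the limit value `⨆ n, val G n`: a fixed action is
optimal for infinitely many horizons. -/
lemma exists_act2_sup [Finite V] (G : Game V) (v : V) (hv : v ∉ G.target) {x : ℕ} (hx : x ≤ G.N) :
    ∃ b2 u2, b2 ≤ G.N - x ∧ G.E v u2 ∧ ∀ b1 u1, b1 ≤ x → G.E v u1 →
      pay (fun v x => ⨆ n, val G n v x) x b1 b2 u1 u2 ≤ ⨆ n, val G n v x := by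
  have hact := fun n => (exists_act G (val_mono_right G n) v hx).2
  choose b u hb hu h using hact
  obtain ⟨⟨⟨b2, hb2⟩, u2⟩, hinf⟩ := Finite.exists_infinite_fiber
    (fun n => ((⟨b n, Nat.lt_succ_of_le ((hb n).trans (Nat.sub_le _ _))⟩, u n) : Fin (G.N + 1) × V))
  rw [Set.infinite_coe_iff] at hinf
  have hfib : ∀ n, ∃ k, n ≤ k ∧ b k = b2 ∧ u k = u2 := by
    intro n
    obtain ⟨k, hk, hnk⟩ := hinf.exists_gt n
    simp only [Set.mem_preimage, Set.mem_singleton_iff, Prod.mk.injEq, Fin.mk.injEq] at hk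
    exact ⟨k, hnk.le, hk.1, hk.2⟩
  obtain ⟨k0, -, e1, e2⟩ := hfib 0
  refine ⟨b2, u2, e1 ▸ hb k0, e2 ▸ hu k0, fun b1 u1 hb1 hu1 => ?_⟩
  have key : ∀ n, pay (val G n) x b1 b2 u1 u2 ≤ ⨆ n, val G n v x := by
    intro n
    obtain ⟨k, hnk, e1, e2⟩ := hfib n
    have h1 := h k b1 u1 hb1 hu1
    rw [e1, e2] at h1
    have h2 : op G (val G k) v x = val G (k + 1) v x := by rw [val, if_neg hv]
    rw [h2] at h1
    refine le_trans (mat_mono ?_ ?_) (h1.trans (le_iSup (fun n => val G n v x) (k + 1)))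
    · exact val_mono_left G _ _ hnk
    · exact val_mono_left G _ _ hnk
  unfold pay mat at key ⊢
  split_ifs at key ⊢
  · exact iSup_le key
  · exact iSup_le key
  · rw [ENNReal.iSup_add_iSup_of_monotone (val_mono_left G _ _) (val_mono_left G _ _),
      ENNReal.iSup_div]
    exact iSup_le key

/-! ### Probability of reaching the target -/

/-- The history and configuration after one round from `c` with history `h` when `w` wins the
bidding. -/
def nxt (σ1 σ2 : Strat V) (h : Hist V) (c : Conf V) (w : Fin 2) : Hist V × Conf V :=
  (h ++ [(c, σ1.bid h c, σ2.bid h c, w)],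
    if w = 0 then
      ⟨σ1.move h c (σ1.bid h c) (σ2.bid h c), c.B1 - σ1.bid h c, c.B2 + σ1.bid h c⟩
    else ⟨σ2.move h c (σ1.bid h c) (σ2.bid h c), c.B1 + σ2.bid h c, c.B2 - σ2.bid h c⟩)

open Classical in
/-- The probability of reaching the target within `n` rounds from `c` with history `h`, computed by
recursion on the number of rounds. -/
noncomputable def prob (G : Game V) (σ1 σ2 : Strat V) : ℕ → Hist V → Conf V → ENNReal
  | 0, _, c => if c.v ∈ G.target then 1 else 0
  | n + 1, h, c =>
    if c.v ∈ G.target then 1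
    else if σ2.bid h c < σ1.bid h c then
      prob G σ1 σ2 n (nxt σ1 σ2 h c 0).1 (nxt σ1 σ2 h c 0).2
    else if σ1.bid h c < σ2.bid h c then
      prob G σ1 σ2 n (nxt σ1 σ2 h c 1).1 (nxt σ1 σ2 h c 1).2
    else (prob G σ1 σ2 n (nxt σ1 σ2 h c 0).1 (nxt σ1 σ2 h c 0).2 +
      prob G σ1 σ2 n (nxt σ1 σ2 h c 1).1 (nxt σ1 σ2 h c 1).2) / 2

/-- The play continued from the state `p` visits the target within `n` rounds. -/
def Reach (G : Game V) (σ1 σ2 : Strat V) (n : ℕ) (p : Hist V × Conf V × ℕ) (ω : ℕ → Fin 2) : Prop :=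
  ∃ m ≤ n, ((stepPlay G σ1 σ2 ω)^[m] p).2.1.v ∈ G.target

lemma reach_zero (G : Game V) (σ1 σ2 : Strat V) (p : Hist V × Conf V × ℕ) (ω : ℕ → Fin 2) :
    Reach G σ1 σ2 0 p ω ↔ p.2.1.v ∈ G.target := by
  simp [Reach]

lemma reach_succ (G : Game V) (σ1 σ2 : Strat V) (n : ℕ) (p : Hist V × Conf V × ℕ)
    (ω : ℕ → Fin 2) :
    Reach G σ1 σ2 (n + 1) p ω ↔
      p.2.1.v ∈ G.target ∨ Reach G σ1 σ2 n (stepPlay G σ1 σ2 ω p) ω := by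
  constructor
  · rintro ⟨m, hm, h⟩
    rcases m with _ | m
    · exact Or.inl h
    · exact Or.inr ⟨m, by omega, by rwa [Function.iterate_succ_apply] at h⟩
  · rintro (h | ⟨m, hm, h⟩)
    · exact ⟨0, by omega, h⟩
    · exact ⟨m + 1, by omega, by rwa [Function.iterate_succ_apply]⟩

lemma stepPlay_eq (G : Game V) (σ1 σ2 : Strat V) (ω : ℕ → Fin 2) (h : Hist V) (c : Conf V)
    (k : ℕ) :
    stepPlay G σ1 σ2 ω (h, c, k) =
      if σ2.bid h c < σ1.bid h c then ((nxt σ1 σ2 h c 0).1, (nxt σ1 σ2 h c 0).2, k)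
      else if σ1.bid h c < σ2.bid h c then ((nxt σ1 σ2 h c 1).1, (nxt σ1 σ2 h c 1).2, k)
      else ((nxt σ1 σ2 h c (ω k)).1, (nxt σ1 σ2 h c (ω k)).2, k + 1) := by
  unfold stepPlay nxt
  rcases lt_trichotomy (σ1.bid h c) (σ2.bid h c) with hb | hb | hb
  · simp [hb, hb.not_gt, hb.ne]
  · simp only [hb, lt_irrefl, if_false, if_true]
    by_cases hw : ω k = 0 <;> simp [hw]
  · simp [hb, hb.ne']

lemma measure_cyl {μ : Measure (ℕ → Fin 2)} (hμ : IsCoin μ) (g : ℕ → Fin 2) (k : ℕ) :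
    μ {ω | ∀ j < k, ω j = g j} = (1 / 2 : ENNReal) ^ k := by
  have := hμ (Finset.range k) g
  simpa using this

/-- Given the outcomes `g` of the `k` ties resolved so far, the target is reached within `n` further
rounds with conditional probability `prob G σ1 σ2 n h c`. -/
lemma measure_cyl_reach {μ : Measure (ℕ → Fin 2)} (hμ : IsCoin μ) (G : Game V) (σ1 σ2 : Strat V)
    (n : ℕ) (h : Hist V) (c : Conf V) (k : ℕ) (g : ℕ → Fin 2) :
    μ {ω | (∀ j < k, ω j = g j) ∧ Reach G σ1 σ2 n (h, c, k) ω} =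
      (1 / 2 : ENNReal) ^ k * prob G σ1 σ2 n h c := by
  induction n generalizing h c k g with
  | zero =>
    simp only [reach_zero, prob]
    split_ifs with hT
    · simpa [hT] using measure_cyl hμ g k
    · simp [hT]
  | succ n ih =>
    simp only [reach_succ, prob, stepPlay_eq]
    by_cases hT : c.v ∈ G.target
    · simpa [hT] using measure_cyl hμ g k
    simp only [hT, false_or, if_false]
    split_ifs with h1 h2
    · exact ih _ _ k g
    · exact ih _ _ k g
    · have hms : MeasurableSet {ω : ℕ → Fin 2 | ω k = 0} :=
        measurable_pi_apply k (measurableSet_singleton 0)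
      -- Conditioning on the next tie extends the cylinder by one coordinate.
      have hsub : ∀ w : Fin 2,
          {ω : ℕ → Fin 2 | (∀ j < k, ω j = g j) ∧ Reach G σ1 σ2 n
            ((nxt σ1 σ2 h c (ω k)).1, (nxt σ1 σ2 h c (ω k)).2, k + 1) ω} ∩ {ω | ω k = w} =
          {ω | (∀ j < k + 1, ω j = Function.update g k w j) ∧ Reach G σ1 σ2 n
            ((nxt σ1 σ2 h c w).1, (nxt σ1 σ2 h c w).2, k + 1) ω} := by
        intro w
        ext ω
        have hcyl : (∀ j < k + 1, ω j = Function.update g k w j) ↔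
            (∀ j < k, ω j = g j) ∧ ω k = w := by
          constructor
          · intro H
            refine ⟨fun j hj => ?_, by simpa using H k (Nat.lt_succ_self k)⟩
            simpa [Function.update_of_ne hj.ne] using H j (by omega)
          · rintro ⟨H, Hk⟩ j hj
            rcases Nat.lt_succ_iff_lt_or_eq.1 hj with hj | rfl
            · rw [Function.update_of_ne hj.ne]; exact H j hj
            · simpa using Hk
        simp only [Set.mem_inter_iff, Set.mem_ofPred_eq, hcyl]
        constructor
        · rintro ⟨⟨H, R⟩, rfl⟩; exact ⟨⟨H, rfl⟩, R⟩
        · rintro ⟨⟨H, rfl⟩, R⟩; exact ⟨⟨H, R⟩, rfl⟩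
      have hcompl : ∀ S : Set (ℕ → Fin 2), S \ {ω | ω k = 0} = S ∩ {ω | ω k = 1} := by
        intro S
        ext ω
        simp only [Set.mem_sdiff, Set.mem_inter_iff, Set.mem_ofPred_eq]
        have : ω k ≠ 0 ↔ ω k = 1 := by omega
        tauto
      rw [← measure_inter_add_sdiff _ hms, hcompl, hsub 0, hsub 1, ih, ih, ← mul_add, pow_succ,
        mul_assoc, ENNReal.div_eq_inv_mul (b := 2) (a := _ + _), one_div]

lemma playAux_eq (G : Game V) (σ1 σ2 : Strat V) (ω : ℕ → Fin 2) (c : Conf V) (n : ℕ) :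
    playAux G σ1 σ2 ω c n = (stepPlay G σ1 σ2 ω)^[n] ([], c, 0) := by
  induction n with
  | zero => rfl
  | succ n ih => rw [playAux, ih, Function.iterate_succ_apply']

/-- The winning probability is the limit of the finite-horizon ones. -/
lemma Pr_eq_iSup {μ : Measure (ℕ → Fin 2)} (hμ : IsCoin μ) (G : Game V) (σ1 σ2 : Strat V)
    (c : Conf V) : Pr μ G σ1 σ2 c = ⨆ n, prob G σ1 σ2 n [] c := by
  have hset : {ω | Wins G σ1 σ2 ω c} = ⋃ n, {ω | Reach G σ1 σ2 n ([], c, 0) ω} := by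
    ext ω
    simp only [Set.mem_ofPred_eq, Set.mem_iUnion, Wins, path, playAux_eq, Reach]
    exact ⟨fun ⟨n, h⟩ => ⟨n, n, le_rfl, h⟩, fun ⟨_, m, _, h⟩ => ⟨m, h⟩⟩
  have hmono : Monotone fun n => {ω | Reach G σ1 σ2 n ([], c, 0) ω} :=
    fun a b hab ω ⟨m, hm, h⟩ => ⟨m, hm.trans hab, h⟩
  rw [Pr, hset, hmono.measure_iUnion]
  refine iSup_congr fun n => ?_
  simpa using measure_cyl_reach hμ G σ1 σ2 n [] c 0 0

/-! ### Optimal strategies -/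

/-- One step of `prob` is the outcome `mat` of a round at the bids the strategies prescribe. -/
lemma prob_succ_eq (G : Game V) (σ1 σ2 : Strat V) (n : ℕ) (h : Hist V) (c : Conf V)
    (hc : c.v ∉ G.target) :
    prob G σ1 σ2 (n + 1) h c =
      mat (fun _ => prob G σ1 σ2 n (nxt σ1 σ2 h c 0).1 (nxt σ1 σ2 h c 0).2)
        (fun _ => prob G σ1 σ2 n (nxt σ1 σ2 h c 1).1 (nxt σ1 σ2 h c 1).2)
        (σ1.bid h c) (σ2.bid h c) := by
  rw [prob, if_neg hc]
  rfl

/-- Player 1 has, for every horizon `K`, a strategy reaching the target within `K` rounds with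
probability at least `val G K`. The general claim, needed for the induction, concerns the state
reached with `n` of the `K` rounds left. -/
lemma val_le_prob [Finite V] (G : Game V) (K : ℕ) :
    ∃ σ1, Legal G 0 σ1 ∧ ∀ σ2, Legal G 1 σ2 → ∀ n h (c : Conf V), h.length + n = K →
      c.B1 + c.B2 = G.N → val G n c.v c.B1 ≤ prob G σ1 σ2 n h c := by
  have hact : ∀ n v x, ∃ b1 u1, b1 ≤ x ∧ G.E v u1 ∧ (x ≤ G.N → ∀ b2 u2, b2 ≤ G.N - x →
      G.E v u2 → op G (val G n) v x ≤ pay (val G n) x b1 b2 u1 u2) := by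
    intro n v x
    by_cases hx : x ≤ G.N
    · obtain ⟨b1, u1, h1, h2, h3⟩ := (exists_act G (val_mono_right G n) v hx).1
      exact ⟨b1, u1, h1, h2, fun _ => h3⟩
    · obtain ⟨u, hu⟩ := G.succ_exists v
      exact ⟨0, u, Nat.zero_le _, hu, fun h => absurd h hx⟩
  choose b u hb hu hbest using hact
  refine ⟨⟨fun h c => b (K - h.length - 1) c.v c.B1, fun h c _ _ => u (K - h.length - 1) c.v c.B1⟩,
    ⟨fun h c => by simpa using hb _ _ _, fun h c _ _ => hu _ _ _⟩, ?_⟩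
  intro σ2 hσ2 n
  induction n with
  | zero => intro h c _ _; exact le_rfl
  | succ n ih =>
    intro h c hK hN
    by_cases hT : c.v ∈ G.target
    · rw [val, prob, if_pos hT, if_pos hT]
    · have hKn : K - h.length - 1 = n := by omega
      have hb2 : σ2.bid h c ≤ c.B2 := by simpa using hσ2.1 h c
      have hb1 := hb n c.v c.B1
      rw [prob_succ_eq _ _ _ _ _ _ hT, val, if_neg hT]
      simp only [hKn]
      refine (hbest n c.v c.B1 (by omega) (σ2.bid h c) _ (by omega)
        (hσ2.2 h c (b n c.v c.B1) (σ2.bid h c))).trans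
        (mat_mono ?_ ?_)
      · refine le_trans ?_ (ih _ _ ?_ ?_)
        · simp only [nxt, hKn, if_true]
          exact le_rfl
        · simp [nxt]; omega
        · simp only [nxt, hKn, if_true]; omega
      · refine le_trans ?_ (ih _ _ ?_ ?_)
        · simp only [nxt, hKn, one_ne_zero, if_false]
          exact le_rfl
        · simp [nxt]; omega
        · simp only [nxt, one_ne_zero, if_false]; omega

/-- Player 2 has a strategy, depending on the current configuration only, that keeps the
probability of reaching the target below `⨆ k, val G k` for every horizon. -/
lemma prob_le_sup [Finite V] (G : Game V) :
    ∃ σ2, Legal G 1 σ2 ∧ ∀ σ1, Legal G 0 σ1 → ∀ n h (c : Conf V),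
      c.B1 + c.B2 = G.N → prob G σ1 σ2 n h c ≤ ⨆ k, val G k c.v c.B1 := by
  have hact : ∀ c : Conf V, ∃ b2 u2, b2 ≤ c.B2 ∧ G.E c.v u2 ∧ (c.B1 + c.B2 = G.N →
      c.v ∉ G.target → ∀ b1 u1, b1 ≤ c.B1 → G.E c.v u1 →
      pay (fun v x => ⨆ n, val G n v x) c.B1 b1 b2 u1 u2 ≤ ⨆ n, val G n c.v c.B1) := by
    intro c
    by_cases hc : c.B1 + c.B2 = G.N ∧ c.v ∉ G.target
    · obtain ⟨b2, u2, h1, h2, h3⟩ := exists_act2_sup G c.v hc.2 (x := c.B1) (by omega)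
      exact ⟨b2, u2, by omega, h2, fun _ _ => h3⟩
    · obtain ⟨u, hu⟩ := G.succ_exists c.v
      exact ⟨0, u, Nat.zero_le _, hu, fun h h' => absurd ⟨h, h'⟩ hc⟩
  choose b u hb hu hbest using hact
  refine ⟨⟨fun _ c => b c, fun _ c _ _ => u c⟩,
    ⟨fun h c => by simpa using hb c, fun h c _ _ => hu c⟩, ?_⟩
  intro σ1 hσ1 n
  induction n with
  | zero => intro h c _; exact le_iSup (fun k => val G k c.v c.B1) 0
  | succ n ih =>
    intro h c hN
    by_cases hT : c.v ∈ G.target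
    · refine le_iSup_of_le 0 ?_
      rw [val, prob, if_pos hT, if_pos hT]
    · have hb1 : σ1.bid h c ≤ c.B1 := by simpa using hσ1.1 h c
      have hb2 := hb c
      rw [prob_succ_eq _ _ _ _ _ _ hT]
      refine le_trans (mat_mono ?_ ?_)
        (hbest c hN hT (σ1.bid h c) _ hb1 (hσ1.2 h c (σ1.bid h c) (b c)))
      · refine (ih _ _ ?_).trans ?_
        · simp only [nxt, if_true]; omega
        · simp only [nxt, if_true]
          exact le_rfl
      · refine (ih _ _ ?_).trans ?_
        · simp only [nxt, one_ne_zero, if_false]; omega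
        · simp only [nxt, one_ne_zero, if_false]
          exact le_rfl

end RBid

open RBid MeasureTheory in
/-- Every discrete reachability bidding game with
random-based tie-breaking is determined: for every configuration `c`,
`val1(G,c) = val2(G,c)`, where the values range over pure strategies. -/
theorem stmt_13 (μ : Measure (ℕ → Fin 2)) (hμ : IsCoin μ)
    {V : Type} [Fintype V] (G : Game V) (c : Conf V) (hc : c.B1 + c.B2 = G.N) :
    val1 μ G c = val2 μ G c := by
  refine le_antisymm (iSup_iInf_le_iInf_iSup _) ?_
  obtain ⟨σ2, hσ2, h2⟩ := prob_le_sup G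
  calc val2 μ G c ≤ ⨆ n, RBid.val G n c.v c.B1 := by
        refine iInf_le_of_le ⟨σ2, hσ2⟩ (iSup_le fun σ1 => ?_)
        rw [Pr_eq_iSup hμ]
        exact iSup_le fun n => h2 σ1.1 σ1.2 n [] c hc
    _ ≤ val1 μ G c := by
        refine iSup_le fun n => ?_
        obtain ⟨σ1, hσ1, h1⟩ := val_le_prob G n
        refine le_iSup_of_le ⟨σ1, hσ1⟩ (le_iInf fun σ2 => ?_)
        rw [Pr_eq_iSup hμ]
        exact le_iSup_of_le n (h1 σ2.1 σ2.2 n [] c (by simp) hc)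
end

section
/- Let G be a discrete reachability bidding game with advantage-based tie-breaking. (1) Holding the advantage is advantageous: for i ∈ {1,2}, if Player i has a winning strategy from a configuration ⟨v, B1, B2, 3−i⟩, then he also has a winning strategy from ⟨v, B1, B2, i⟩. (2) The advantage can be replaced by a unit of budget: if Player 1 has a winning strategy from ⟨v, B1, B2, 1⟩ and B2 ≥ 1, then he also has a winning strategy from ⟨v, B1+1, B2−1, 2⟩; if Player 2 has a winning strategy from ⟨v, B1, B2, 2⟩ and B1 ≥ 1, then he also has a winning strategy from ⟨v, B1−1, B2+1, 1⟩. -/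
/-!
Fix a player `i` and compare configurations from his point of view: `c ≤ c'` when the vertex and
the total budget agree and the pair (own budget, "holds the advantage") of `c'` is
lexicographically at least that of `c` (`Better`).  All three claims say that winning is upward
closed for this order (`hasWin_mono`).

Winning is governed by the controllable-predecessor operator `CPre i`: a bid of player `i` that,
against every bid of the opponent, leads into a given set.  Here a symmetry of the mechanism
helps: after a tie the advantage always belongs to the player who *lost* the bidding, whoever held
it before.  The holder thus only decides between "`i` wins, opponent gets the advantage" and "`i`
loses and gets the advantage".

The core is `cpre_up`: `CPre i` maps upward closed sets to upward closed sets, and the *same* bid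
`b` works in the better configuration.  The only interesting case is a tie when the advantage was
traded for a unit of budget, where the opponent now makes the choice.  If he takes the bidding,
the resulting configuration is at least as good as the one reached from `c` when he outbids
`b` by one (he has that extra unit in `c`); if he hands it over, it is at least as good as the one
reached from `c` when he bids `0 < b`, the unit again paying for the advantage (and for `b = 0`
no money moves at all).

Finally, Player 1 wins exactly on the least fixed point of `U ↦ T ∪ CPre 0 U`, and Player 2 exactly
off the least fixed point of `U ↦ T ∪ (CPre 1 Uᶜ)ᶜ`.  Ordinal ranks on these fixed points
(`exists_rank`) turn one-step guarantees (`follow`, `spoil`) into guarantees for whole plays.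
-/

/-! # Discrete bidding games -/

namespace Bid

/-- A tie-breaking mechanism with a set `S` of states.  When a tie occurs in
state `s`, Player `chooser s` selects the winner of the bidding from the
nonempty set `opts s` (a deterministic mechanism has a singleton `opts s`, so
the choice is forced).  After each bidding the state is updated by `update`
from the outcome of the bidding: whether a tie occurred, the winner, the
winning bid, and the vertex the winner moved to.  Player 1 is `0 : Fin 2`,
Player 2 is `1 : Fin 2`. -/
structure Mech (V : Type) where
  S : Type
  opts : S → Set (Fin 2)
  opts_nonempty : ∀ s, (opts s).Nonempty
  chooser : S → Fin 2
  update : S → Bool → Fin 2 → ℕ → V → S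

/-- A discrete bidding game: a finite directed graph in which every vertex has
an outgoing edge, a total budget `N`, a tie-breaking mechanism, and an
objective for Player 1 on infinite vertex sequences. -/
structure Game (V : Type) where
  E : V → V → Prop
  succ_exists : ∀ v, ∃ u, E v u
  N : ℕ
  M : Mech V
  obj : (ℕ → V) → Prop

/-- A configuration `⟨v, B1, B2, s⟩`: token position, budgets, mechanism state. -/
structure Conf (V S : Type) where
  v : V
  B1 : ℕ
  B2 : ℕ
  s : S

/-- A round of the game, as recorded in histories: the configuration and the
two bids. -/
abbrev Round (V S : Type) := Conf V S × ℕ × ℕ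

abbrev Hist (V S : Type) := List (Round V S)

/-- A (pure) strategy: a bid for each history and current configuration, a
choice of bidding winner upon a tie (used when this player is the mechanism's
chooser), and a choice of successor vertex upon winning a bidding. -/
structure Strat (V : Type) (M : Mech V) where
  bid : Hist V M.S → Conf V M.S → ℕ
  choice : Hist V M.S → Conf V M.S → ℕ → Fin 2
  move : Hist V M.S → Conf V M.S → ℕ → ℕ → V

def budget {V S : Type} (i : Fin 2) (c : Conf V S) : ℕ :=
  if i = 0 then c.B1 else c.B2

/-- Legality of a strategy for Player `i`: bids never exceed the available
budget, tie choices are members of the mechanism's option set, and moves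
follow edges of the graph. -/
def Legal {V : Type} (G : Game V) (i : Fin 2) (σ : Strat V G.M) : Prop :=
  (∀ h c, σ.bid h c ≤ budget i c) ∧
  (∀ h c b, σ.choice h c b ∈ G.M.opts c.s) ∧
  (∀ h c b1 b2, G.E c.v (σ.move h c b1 b2))

/-- The configuration after a bidding at `c` with bids `b1, b2`, tie flag
`tie`, bidding winner `w` and destination `d`: the winner pays his bid to the
loser, the token moves to `d`, and the mechanism state is updated. -/
def nextConf {V : Type} (G : Game V) (c : Conf V G.M.S) (b1 b2 : ℕ) (tie : Bool)
    (w : Fin 2) (d : V) : Conf V G.M.S :=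
  { v := d
    B1 := if w = 0 then c.B1 - b1 else c.B1 + b2
    B2 := if w = 0 then c.B2 + b1 else c.B2 - b2
    s := G.M.update c.s tie w (if w = 0 then b1 else b2) d }

/-- One round of the play of two strategies. -/
def stepPlay {V : Type} (G : Game V) (σ1 σ2 : Strat V G.M)
    (p : Hist V G.M.S × Conf V G.M.S) : Hist V G.M.S × Conf V G.M.S :=
  let h := p.1
  let c := p.2
  let b1 := σ1.bid h c
  let b2 := σ2.bid h c
  let w : Fin 2 :=
    if b2 < b1 then 0
    else if b1 < b2 then 1
    else if G.M.chooser c.s = 0 then σ1.choice h c b1 else σ2.choice h c b1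
  let d := if w = 0 then σ1.move h c b1 b2 else σ2.move h c b1 b2
  (h ++ [(c, b1, b2)], nextConf G c b1 b2 (decide (b1 = b2)) w d)

def playAux {V : Type} (G : Game V) (σ1 σ2 : Strat V G.M) (c0 : Conf V G.M.S) :
    ℕ → Hist V G.M.S × Conf V G.M.S
  | 0 => ([], c0)
  | n + 1 => stepPlay G σ1 σ2 (playAux G σ1 σ2 c0 n)

/-- The vertex path of the play of `σ1` against `σ2` from `c0`. -/
def path {V : Type} (G : Game V) (σ1 σ2 : Strat V G.M) (c0 : Conf V G.M.S) (n : ℕ) : V :=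
  (playAux G σ1 σ2 c0 n).2.v

/-- `σ` is a winning strategy for Player `i` at the configuration `c`. -/
def WinStrat {V : Type} (G : Game V) (i : Fin 2) (σ : Strat V G.M)
    (c : Conf V G.M.S) : Prop :=
  Legal G i σ ∧ ∀ τ : Strat V G.M, Legal G (1 - i) τ →
    (if i = 0 then G.obj (path G σ τ c) else ¬ G.obj (path G τ σ c))

/-- Player `i` has a winning strategy from configuration `c`. -/
def HasWin {V : Type} (G : Game V) (i : Fin 2) (c : Conf V G.M.S) : Prop :=
  ∃ σ, WinStrat G i σ c

/-! ## The turn-based game `G_1` in which Player 1 reveals his bid first. -/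

/-- A Player 2 strategy in `G_1`: its bid may additionally depend on the bid
just revealed by Player 1. -/
structure RespStrat (V : Type) (M : Mech V) where
  bid : Hist V M.S → Conf V M.S → ℕ → ℕ
  choice : Hist V M.S → Conf V M.S → ℕ → Fin 2
  move : Hist V M.S → Conf V M.S → ℕ → ℕ → V

def RespLegal {V : Type} (G : Game V) (τ : RespStrat V G.M) : Prop :=
  (∀ h c b1, τ.bid h c b1 ≤ c.B2) ∧
  (∀ h c b, τ.choice h c b ∈ G.M.opts c.s) ∧
  (∀ h c b1 b2, G.E c.v (τ.move h c b1 b2))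

def stepPlayFirst {V : Type} (G : Game V) (σ : Strat V G.M) (τ : RespStrat V G.M)
    (p : Hist V G.M.S × Conf V G.M.S) : Hist V G.M.S × Conf V G.M.S :=
  let h := p.1
  let c := p.2
  let b1 := σ.bid h c
  let b2 := τ.bid h c b1
  let w : Fin 2 :=
    if b2 < b1 then 0
    else if b1 < b2 then 1
    else if G.M.chooser c.s = 0 then σ.choice h c b1 else τ.choice h c b1
  let d := if w = 0 then σ.move h c b1 b2 else τ.move h c b1 b2
  (h ++ [(c, b1, b2)], nextConf G c b1 b2 (decide (b1 = b2)) w d)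

def playFirstAux {V : Type} (G : Game V) (σ : Strat V G.M) (τ : RespStrat V G.M)
    (c0 : Conf V G.M.S) : ℕ → Hist V G.M.S × Conf V G.M.S
  | 0 => ([], c0)
  | n + 1 => stepPlayFirst G σ τ (playFirstAux G σ τ c0 n)

def pathFirst {V : Type} (G : Game V) (σ : Strat V G.M) (τ : RespStrat V G.M)
    (c0 : Conf V G.M.S) (n : ℕ) : V :=
  (playFirstAux G σ τ c0 n).2.v

/-- Player 1 has a winning strategy from configuration `c` in the turn-based
game `G_1` in which he reveals his bid before Player 2. -/
def P1WinsFirst {V : Type} (G : Game V) (c : Conf V G.M.S) : Prop :=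
  ∃ σ : Strat V G.M, Legal G 0 σ ∧
    ∀ τ : RespStrat V G.M, RespLegal G τ → G.obj (pathFirst G σ τ c)

/-! ## The bidding matrix -/

/-- The position of `G_1` reached from `c` after bids `b1, b2` with bidding
winner `w` is winning for Player 1: if Player 1 won the bidding he can choose a
successor leading to a configuration from which he wins `G_1`, and if Player 2
won the bidding then every successor he may choose leads to such a
configuration. -/
def AfterWin {V : Type} (G : Game V) (c : Conf V G.M.S) (b1 b2 : ℕ) (tie : Bool)
    (w : Fin 2) : Prop :=
  if w = 0 then ∃ d, G.E c.v d ∧ P1WinsFirst G (nextConf G c b1 b2 tie w d)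
  else ∀ d, G.E c.v d → P1WinsFirst G (nextConf G c b1 b2 tie w d)

/-- The position of `G_1` reached from `c` after the bids `b1, b2` — just
before the bidding winner chooses a successor vertex and, on a tie, before the
mechanism's chooser decides who wins the bidding — is winning for Player 1. -/
def PosWin1 {V : Type} (G : Game V) (c : Conf V G.M.S) (b1 b2 : ℕ) : Prop :=
  if b1 = b2 then
    if G.M.chooser c.s = 0 then ∃ w ∈ G.M.opts c.s, AfterWin G c b1 b2 true w
    else ∀ w ∈ G.M.opts c.s, AfterWin G c b1 b2 true w
  else AfterWin G c b1 b2 false (if b2 < b1 then 0 else 1)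

open Classical in
/-- The bidding matrix of the configuration `c`: `Mc G c b1 b2 = 1` if the
position of `G_1` reached from `c` after the bids `b1, b2` is winning for
Player 1 in `G_1`, and `= 2` otherwise. -/
noncomputable def Mc {V : Type} (G : Game V) (c : Conf V G.M.S) (b1 b2 : ℕ) : ℕ :=
  if PosWin1 G c b1 b2 then 1 else 2

/-! ## Particular tie-breaking mechanisms -/

/-- A general tie-breaking transducer: its state is updated from the letter
describing the outcome of a bidding (vertex moved to, winner, whether a tie
occurred, winning bid), and on a tie in state `q` Player `Γ q` wins. -/
structure TieTransducer (V : Type) where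
  Q : Type
  q0 : Q
  δ : Q → V → Fin 2 → Bool → ℕ → Q
  Γ : Q → Fin 2

/-- The mechanism of a tie-breaking transducer. -/
def TieTransducer.mech {V : Type} (T : TieTransducer V) : Mech V where
  S := T.Q
  opts := fun q => {T.Γ q}
  opts_nonempty := fun q => ⟨T.Γ q, rfl⟩
  chooser := fun q => T.Γ q
  update := fun q tie w b d => T.δ q d w tie b

/-- A tie-breaking transducer that is un-aware of ties: its input letters
record only the vertex moved to, the winner, and the winning bid. -/
structure TieTransducerUA (V : Type) where
  Q : Type
  q0 : Q
  δ : Q → V → Fin 2 → ℕ → Q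
  Γ : Q → Fin 2

/-- The mechanism of a tie-breaking transducer that is un-aware of ties. -/
def TieTransducerUA.mech {V : Type} (T : TieTransducerUA V) : Mech V where
  S := T.Q
  opts := fun q => {T.Γ q}
  opts_nonempty := fun q => ⟨T.Γ q, rfl⟩
  chooser := fun q => T.Γ q
  update := fun q _tie w b d => T.δ q d w b

/-- Advantage-based tie-breaking: the state records the advantage holder; on a
tie the holder chooses the winner; if he chooses himself the advantage passes
to the opponent, otherwise he keeps it; non-tied biddings leave the state
unchanged. -/
def advMech (V : Type) : Mech V where
  S := Fin 2
  opts := fun _ => Set.univ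
  opts_nonempty := fun _ => ⟨0, Set.mem_univ 0⟩
  chooser := fun s => s
  update := fun s tie w _ _ => if tie then (if w = s then 1 - s else s) else s

/-- Alternating tie-breaking: the state records the advantage holder; on a tie
the holder wins the bidding and the advantage passes to the other player;
non-tied biddings leave the state unchanged. -/
def altMech (V : Type) : Mech V where
  S := Fin 2
  opts := fun s => {s}
  opts_nonempty := fun s => ⟨s, rfl⟩
  chooser := fun s => s
  update := fun s tie _ _ _ => if tie then 1 - s else s

end Bid

namespace Bid

/-! ### Ranked least fixed points -/

/-- Transfinite iteration of a set operator `F` from the empty set. -/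
noncomputable def stage {X : Type} (F : Set X → Set X) (α : Ordinal.{0}) : Set X :=
  F {x | ∃ β, ∃ _ : β < α, x ∈ stage F β}
termination_by α

/-- The least fixed point of a monotone operator carries a rank by which membership of each point
is witnessed by points of smaller rank. -/
lemma exists_rank {X : Type} (F : Set X → Set X) (hF : Monotone F) :
    ∃ (L : Set X) (r : X → Ordinal.{0}), F L ⊆ L ∧ ∀ c ∈ L, c ∈ F {c' | c' ∈ L ∧ r c' < r c} := by
  classical
  let L : Set X := {x | ∃ α, x ∈ stage F α}
  let r : X → Ordinal.{0} := fun x => sInf {α | x ∈ stage F α}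
  have hr : ∀ x ∈ L, x ∈ stage F (r x) := fun x hx =>
    csInf_mem (s := {α | x ∈ stage F α}) hx
  refine ⟨L, r, ?_, ?_⟩
  · intro x hx
    -- One stage beyond the supremum of all ranks, everything in `L` has been collected.
    refine ⟨Order.succ (⨆ y, r y), ?_⟩
    rw [stage]
    refine hF ?_ hx
    intro y hy
    exact ⟨r y, Order.lt_succ_of_le (Ordinal.le_iSup r y), hr y hy⟩
  · intro x hx
    have h := hr x hx
    rw [stage] at h
    refine hF ?_ h
    rintro y ⟨β, hβ, hy⟩
    exact ⟨⟨β, hy⟩, lt_of_le_of_lt (csInf_le' hy) hβ⟩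

/-- Induction principle for a ranked fixed point: it lies in every pre-fixed point. -/
lemma rank_induction {X : Type} {F : Set X → Set X} (hF : Monotone F) {L : Set X}
    {r : X → Ordinal.{0}} (hL : ∀ c ∈ L, c ∈ F {c' | c' ∈ L ∧ r c' < r c})
    {U : Set X} (hU : F U ⊆ U) : L ⊆ U := by
  have key : ∀ α : Ordinal.{0}, ∀ c ∈ L, r c = α → c ∈ U := by
    intro α
    induction α using WellFoundedLT.induction with
    | ind α ih =>
      rintro c hc rfl
      exact hU (hF (fun c' hc' => ih (r c') hc'.2 c' hc'.1 rfl) (hL c hc))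
  exact fun c hc => key _ c hc rfl

/-! ### One round, seen by one player -/

section

variable {V : Type}

/-- The reachability game with advantage-based tie-breaking. -/
abbrev advG (E : V → V → Prop) (hsucc : ∀ v, ∃ u, E v u) (N : ℕ) (T : Set V) : Game V :=
  ⟨E, hsucc, N, advMech V, fun p => ∃ n, p n ∈ T⟩

/-- The configuration in which player `i` has budget `A` and his opponent `B`. -/
def mk (i : Fin 2) (d : V) (A B : ℕ) (s : Fin 2) : Conf V (Fin 2) :=
  ⟨d, if i = 0 then A else B, if i = 0 then B else A, s⟩

/-- Player `i`, having bid `b` against `b'` and won the bidding, can move into `U`.  After a tie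
the advantage is with the opponent. -/
def WinGood (E : V → V → Prop) (i : Fin 2) (U : Set (Conf V (Fin 2))) (c : Conf V (Fin 2))
    (b b' : ℕ) : Prop :=
  ∃ d, E c.v d ∧ mk i d (budget i c - b) (budget (1 - i) c + b)
    (if b' = b then 1 - i else c.s) ∈ U

/-- Player `i`, having bid `b` against `b'` and lost the bidding, is moved into `U` whatever the
opponent does.  After a tie the advantage is with player `i`. -/
def LoseGood (E : V → V → Prop) (i : Fin 2) (U : Set (Conf V (Fin 2))) (c : Conf V (Fin 2))
    (b b' : ℕ) : Prop :=
  ∀ d, E c.v d → mk i d (budget i c + b') (budget (1 - i) c - b')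
    (if b' = b then i else c.s) ∈ U

/-- After the bids `b` of player `i` and `b'` of his opponent, player `i` can force `U`. -/
def Good (E : V → V → Prop) (i : Fin 2) (U : Set (Conf V (Fin 2))) (c : Conf V (Fin 2))
    (b b' : ℕ) : Prop :=
  (b' < b → WinGood E i U c b b') ∧ (b < b' → LoseGood E i U c b b') ∧
  (b' = b → (c.s = i → WinGood E i U c b b' ∨ LoseGood E i U c b b') ∧
    (c.s ≠ i → WinGood E i U c b b' ∧ LoseGood E i U c b b'))

/-- The controllable predecessor: configurations where player `i` has a bid that forces `U` in one
round. -/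
def CPre (E : V → V → Prop) (i : Fin 2) (U : Set (Conf V (Fin 2))) : Set (Conf V (Fin 2)) :=
  {c | ∃ b ≤ budget i c, ∀ b' ≤ budget (1 - i) c, Good E i U c b b'}

lemma WinGood.mono {E : V → V → Prop} {i : Fin 2} {U U' : Set (Conf V (Fin 2))} (h : U ⊆ U')
    {c : Conf V (Fin 2)} {b b' : ℕ} (hw : WinGood E i U c b b') : WinGood E i U' c b b' := by
  obtain ⟨d, hd, hm⟩ := hw
  exact ⟨d, hd, h hm⟩

lemma LoseGood.mono {E : V → V → Prop} {i : Fin 2} {U U' : Set (Conf V (Fin 2))} (h : U ⊆ U')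
    {c : Conf V (Fin 2)} {b b' : ℕ} (hw : LoseGood E i U c b b') : LoseGood E i U' c b b' :=
  fun d hd => h (hw d hd)

lemma cpre_mono (E : V → V → Prop) (i : Fin 2) : Monotone (CPre E i) := by
  rintro U U' h c ⟨b, hb, hg⟩
  refine ⟨b, hb, fun b' hb' => ?_⟩
  obtain ⟨h1, h2, h3⟩ := hg b' hb'
  exact ⟨fun x => (h1 x).mono h, fun x => (h2 x).mono h, fun x =>
    ⟨fun y => ((h3 x).1 y).imp (·.mono h) (·.mono h),
     fun y => ⟨((h3 x).2 y).1.mono h, ((h3 x).2 y).2.mono h⟩⟩⟩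

/-! ### Monotonicity in budget and advantage -/

/-- `c'` is at least as good as `c` for player `i`: same vertex and total budget, and (own budget,
holding the advantage) is lexicographically at least as large. -/
def Better (i : Fin 2) (c c' : Conf V (Fin 2)) : Prop :=
  c.v = c'.v ∧ budget i c + budget (1 - i) c = budget i c' + budget (1 - i) c' ∧
  (budget i c < budget i c' ∨ (budget i c = budget i c' ∧ (c.s = i → c'.s = i)))

lemma Better.refl (i : Fin 2) (c : Conf V (Fin 2)) : Better i c c :=
  ⟨rfl, rfl, Or.inr ⟨rfl, id⟩⟩

lemma Better.trans {i : Fin 2} {c c' c'' : Conf V (Fin 2)} (h : Better i c c')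
    (h' : Better i c' c'') : Better i c c'' := by
  obtain ⟨h1, h2, h3⟩ := h
  obtain ⟨k1, k2, k3⟩ := h'
  refine ⟨h1.trans k1, h2.trans k2, ?_⟩
  rcases h3 with h3 | ⟨h3, h4⟩ <;> rcases k3 with k3 | ⟨k3, k4⟩
  · left; omega
  · left; omega
  · left; omega
  · exact Or.inr ⟨h3.trans k3, fun x => k4 (h4 x)⟩

@[simp] lemma budget_mk_self (i : Fin 2) (d : V) (A B : ℕ) (s : Fin 2) :
    budget i (mk i d A B s) = A := by
  unfold budget mk; split_ifs <;> rfl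

@[simp] lemma budget_mk_other (i : Fin 2) (d : V) (A B : ℕ) (s : Fin 2) :
    budget (1 - i) (mk i d A B s) = B := by
  fin_cases i <;> rfl

lemma better_mk {i : Fin 2} {d : V} {A B A' B' : ℕ} {s s' : Fin 2} (h : A + B = A' + B')
    (h' : A < A' ∨ (A = A' ∧ (s = i → s' = i))) :
    Better i (mk i d A B s) (mk i d A' B' s') := by
  refine ⟨rfl, ?_, ?_⟩ <;> simpa

/-- The controllable predecessor of an upward closed set is upward closed; the bid that works in
`c` works in every better `c'`. -/
lemma cpre_up {E : V → V → Prop} (hsucc : ∀ v, ∃ u, E v u) {i : Fin 2}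
    {U : Set (Conf V (Fin 2))}
    (hU : ∀ c c', Better i c c' → c ∈ U → c' ∈ U) {c c' : Conf V (Fin 2)} (h : Better i c c')
    (hc : c ∈ CPre E i U) : c' ∈ CPre E i U := by
  obtain ⟨b, hb, hg⟩ := hc
  obtain ⟨hv, hsum, hlex⟩ := h
  have hne : (1 : Fin 2) - i ≠ i := by fin_cases i <;> decide
  have hbb : b ≤ budget i c' := by rcases hlex with h | h <;> omega
  refine ⟨b, hbb, fun b' hb' => ?_⟩
  have hb'B : b' ≤ budget (1 - i) c := by rcases hlex with h | h <;> omega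
  obtain ⟨g1, g2, g3⟩ := hg b' hb'B
  have trW : ∀ (x y : ℕ), WinGood E i U c b x →
      (budget i c < budget i c' ∨ (budget i c = budget i c' ∧
        ((if x = b then 1 - i else c.s) = i → (if y = b then 1 - i else c'.s) = i))) →
      WinGood E i U c' b y := by
    rintro x y ⟨d, hd, hm⟩ hl
    refine ⟨d, hv ▸ hd, hU _ _ (better_mk (by omega) ?_) hm⟩
    rcases hl with hl | hl
    · left; omega
    · right; exact ⟨by omega, hl.2⟩
  have trL : LoseGood E i U c b b' →
      (budget i c < budget i c' ∨ (budget i c = budget i c' ∧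
        ((if b' = b then i else c.s) = i → (if b' = b then i else c'.s) = i))) →
      LoseGood E i U c' b b' := by
    intro hl0 hl d hd
    refine hU _ _ (better_mk (by omega) ?_) (hl0 d (hv ▸ hd))
    rcases hl with hl | hl
    · left; omega
    · right; exact ⟨by omega, hl.2⟩
  refine ⟨fun hlt => trW b' b' (g1 hlt) ?_, fun hlt => trL (g2 hlt) ?_, fun he => ?_⟩
  · rw [if_neg (by omega), if_neg (by omega)]; exact hlex
  · rw [if_neg (by omega), if_neg (by omega)]; exact hlex
  · subst he
    have hle : budget i c < budget i c' ∨ budget i c = budget i c' := by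
      rcases hlex with h | h
      · exact Or.inl h
      · exact Or.inr h.1
    -- After a tie the advantage does not depend on who held it before.
    have trW' : WinGood E i U c b' b' → WinGood E i U c' b' b' := fun hw =>
      trW b' b' hw (hle.imp_right fun h => ⟨h, by simp⟩)
    have trL' : LoseGood E i U c b' b' → LoseGood E i U c' b' b' := fun hw =>
      trL hw (hle.imp_right fun h => ⟨h, by simp⟩)
    obtain ⟨g4, g5⟩ := g3 rfl
    by_cases hs : c.s = i
    · refine ⟨fun _ => (g4 hs).imp trW' trL', fun hs' => ?_⟩
      -- The advantage was traded for budget, so the inequality of budgets is strict.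
      have hlt : budget i c < budget i c' := by
        rcases hlex with h | h
        · exact h
        · exact absurd (h.2 hs) hs'
      constructor
      · rcases Nat.eq_zero_or_pos b' with h0 | h0
        · rcases g4 hs with hw | hl
          · exact trW' hw
          · obtain ⟨d, hd⟩ := hsucc c.v
            have := hl d hd
            subst h0
            refine ⟨d, hv ▸ hd, hU _ _ (better_mk (by omega) (Or.inl (by omega))) this⟩
        · exact trW 0 b' ((hg 0 (Nat.zero_le _)).1 h0) (Or.inl hlt)
      · -- In `c` the opponent can afford `b' + 1`, which leads to the same budgets or fewer.
        have hl := (hg (b' + 1) (by omega)).2.1 (by omega)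
        intro d hd
        have := hl d (hv ▸ hd)
        refine hU _ _ (better_mk (by omega) ?_) this
        rw [if_pos rfl]
        rcases Nat.lt_or_ge (budget i c + (b' + 1)) (budget i c' + b') with h | h
        · exact Or.inl h
        · exact Or.inr ⟨by omega, fun _ => rfl⟩
    · obtain ⟨hw, hl⟩ := g5 hs
      exact ⟨fun _ => Or.inl (trW' hw), fun _ => ⟨trW' hw, trL' hl⟩⟩

/-! ### Strategies for one round -/

variable {E : V → V → Prop} {hsucc : ∀ v, ∃ u, E v u} {N : ℕ} {T : Set V}

/-- One round of play, with the strategy of player `i` first. -/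
def stepI (G : Game V) (i : Fin 2) (σ τ : Strat V G.M) (p : Hist V G.M.S × Conf V G.M.S) :
    Hist V G.M.S × Conf V G.M.S :=
  if i = 0 then stepPlay G σ τ p else stepPlay G τ σ p

/-- The move of player `i` after his own bid `b` and the opponent's bid `b'`. -/
def mv {M : Mech V} (i : Fin 2) (σ : Strat V M) (h : Hist V M.S) (c : Conf V M.S) (b b' : ℕ) : V :=
  if i = 0 then σ.move h c b b' else σ.move h c b' b

/-- A round described symmetrically in the two players: after a tie the advantage is with the
loser of the bidding, regardless of the previous holder. -/
lemma step_spec (i : Fin 2) (σ τ : Strat V (advMech V)) (h : Hist V (Fin 2))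
    (c : Conf V (Fin 2)) (b b' : ℕ) (hb : σ.bid h c = b) (hb' : τ.bid h c = b') :
    (stepI (advG E hsucc N T) i σ τ (h, c)).2 =
      if b' < b ∨ (b' = b ∧ (if c.s = i then σ.choice h c b else τ.choice h c b) = i)
      then mk i (mv i σ h c b b') (budget i c - b) (budget (1 - i) c + b)
        (if b' = b then 1 - i else c.s)
      else mk i (mv (1 - i) τ h c b' b) (budget i c + b') (budget (1 - i) c - b')
        (if b' = b then i else c.s) := by
  subst hb hb'
  have hf : ∀ x : Fin 2, x = 0 ∨ x = 1 := by decide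
  have hs := hf c.s
  have h1 := hf (σ.choice h c (σ.bid h c))
  have h2 := hf (τ.choice h c (τ.bid h c))
  rcases lt_trichotomy (σ.bid h c) (τ.bid h c) with hlt | heq | hlt
  · fin_cases i <;>
      simp [stepI, stepPlay, nextConf, mk, mv, budget, advMech, hlt, hlt.ne, hlt.ne', hlt.not_gt]
  · rw [← heq] at h2 ⊢
    fin_cases i <;> rcases hs with hs | hs <;> rcases h1 with h1 | h1 <;> rcases h2 with h2 | h2 <;>
      simp [stepI, stepPlay, nextConf, mk, mv, budget, advMech, heq.symm, hs, h1, h2]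
  · fin_cases i <;>
      simp [stepI, stepPlay, nextConf, mk, mv, budget, advMech, hlt, hlt.ne, hlt.ne', hlt.not_gt]

/-- Player `i` can enforce his one-step guarantees by a single strategy. -/
lemma follow (i : Fin 2) (U : Conf V (Fin 2) → Set (Conf V (Fin 2))) :
    ∃ σ, Legal (advG E hsucc N T) i σ ∧ ∀ τ, Legal (advG E hsucc N T) (1 - i) τ →
      ∀ (h : Hist V (Fin 2)) (c : Conf V (Fin 2)), c ∈ CPre E i (U c) →
        (stepI (advG E hsucc N T) i σ τ (h, c)).2 ∈ U c := by
  classical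
  have hbid : ∀ c : Conf V (Fin 2), ∃ b ≤ budget i c, c ∈ CPre E i (U c) →
      ∀ b' ≤ budget (1 - i) c, Good E i (U c) c b b' := by
    intro c
    by_cases hc : c ∈ CPre E i (U c)
    · obtain ⟨b, hb, hg⟩ := hc
      exact ⟨b, hb, fun _ => hg⟩
    · exact ⟨0, Nat.zero_le _, fun h => absurd h hc⟩
  choose bid hbid1 hbid2 using hbid
  have hmove : ∀ (c : Conf V (Fin 2)) (b b' : ℕ), ∃ d, E c.v d ∧ (WinGood E i (U c) c b b' →
      mk i d (budget i c - b) (budget (1 - i) c + b) (if b' = b then 1 - i else c.s) ∈ U c) := by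
    intro c b b'
    by_cases hw : WinGood E i (U c) c b b'
    · obtain ⟨d, hd, hm⟩ := hw
      exact ⟨d, hd, fun _ => hm⟩
    · obtain ⟨d, hd⟩ := hsucc c.v
      exact ⟨d, hd, fun h => absurd h hw⟩
  choose move hmove1 hmove2 using hmove
  refine ⟨⟨fun _ c => bid c, fun _ c b => if WinGood E i (U c) c b b then i else 1 - i,
    fun _ c b1 b2 => if i = 0 then move c b1 b2 else move c b2 b1⟩,
    ⟨fun _ c => hbid1 c, fun _ _ _ => Set.mem_univ _, fun _ c b1 b2 => ?_⟩, fun τ hτ h c hc => ?_⟩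
  · dsimp only
    split_ifs
    · exact hmove1 c b1 b2
    · exact hmove1 c b2 b1
  · rw [step_spec i _ τ h c _ _ rfl rfl]
    have hmv : mv i (M := advMech V) ⟨fun _ c => bid c,
        fun _ c b => if WinGood E i (U c) c b b then i else 1 - i,
        fun _ c b1 b2 => if i = 0 then move c b1 b2 else move c b2 b1⟩ h c (bid c) (τ.bid h c)
        = move c (bid c) (τ.bid h c) := by
      unfold mv; split_ifs <;> rfl
    have hne : (1 : Fin 2) - i ≠ i := by fin_cases i <;> decide
    have hedge : E c.v (mv (1 - i) τ h c (τ.bid h c) (bid c)) := by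
      unfold mv; split_ifs <;> exact hτ.2.2 h c _ _
    obtain ⟨g1, g2, g3⟩ := hbid2 c hc (τ.bid h c) (hτ.1 h c)
    rw [hmv]
    dsimp only
    refine iteInduction (motive := (· ∈ U c)) (fun hcond => ?_) (fun hcond => ?_)
    · refine hmove2 c _ _ ?_
      rcases hcond with hlt | ⟨heq, hch⟩
      · exact g1 hlt
      · by_cases hs : c.s = i
        · rw [if_pos hs] at hch
          by_contra hw
          rw [heq] at hw
          rw [if_neg hw] at hch
          exact hne hch
        · exact ((g3 heq).2 hs).1
    · refine (show LoseGood E i (U c) c (bid c) (τ.bid h c) from ?_) _ hedge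
      rcases lt_trichotomy (τ.bid h c) (bid c) with hlt | heq | hlt
      · exact absurd (Or.inl hlt) hcond
      · by_cases hs : c.s = i
        · refine ((g3 heq).1 hs).resolve_left fun hw => hcond (Or.inr ⟨heq, ?_⟩)
          rw [heq] at hw
          rw [if_pos hs, if_pos hw]
        · exact ((g3 heq).2 hs).2
      · exact g2 hlt

/-- Against a fixed strategy of player `i`, the opponent can refute every one-step guarantee that
player `i` does not have. -/
lemma spoil (i : Fin 2) (U : Conf V (Fin 2) → Set (Conf V (Fin 2)))
    (σ : Strat V (advMech V)) (hσ : Legal (advG E hsucc N T) i σ) :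
    ∃ τ, Legal (advG E hsucc N T) (1 - i) τ ∧
      ∀ (h : Hist V (Fin 2)) (c : Conf V (Fin 2)), c ∉ CPre E i (U c) →
        (stepI (advG E hsucc N T) i σ τ (h, c)).2 ∉ U c := by
  classical
  have hne : (1 : Fin 2) - i ≠ i := by fin_cases i <;> decide
  have hbid : ∀ (h : Hist V (Fin 2)) (c : Conf V (Fin 2)), ∃ b' ≤ budget (1 - i) c,
      c ∉ CPre E i (U c) → ¬ Good E i (U c) c (σ.bid h c) b' := by
    intro h c
    by_cases hc : c ∈ CPre E i (U c)
    · exact ⟨0, Nat.zero_le _, fun h => absurd hc h⟩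
    · by_contra! hn
      exact hc ⟨σ.bid h c, hσ.1 h c, fun b' hb' => (hn b' hb').2⟩
  choose bid hbid1 hbid2 using hbid
  have hmove : ∀ (c : Conf V (Fin 2)) (b b' : ℕ), ∃ d, E c.v d ∧ (¬ LoseGood E i (U c) c b b' →
      mk i d (budget i c + b') (budget (1 - i) c - b') (if b' = b then i else c.s) ∉ U c) := by
    intro c b b'
    by_cases hl : LoseGood E i (U c) c b b'
    · obtain ⟨d, hd⟩ := hsucc c.v
      exact ⟨d, hd, fun h => absurd hl h⟩
    · have hl' := hl
      unfold LoseGood at hl'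
      push Not at hl'
      obtain ⟨d, hd, hm⟩ := hl'
      exact ⟨d, hd, fun _ => hm⟩
  choose move hmove1 hmove2 using hmove
  refine ⟨⟨bid, fun _ c b => if WinGood E i (U c) c b b then 1 - i else i,
    fun _ c b1 b2 => if i = 0 then move c b1 b2 else move c b2 b1⟩,
    ⟨hbid1, fun _ _ _ => Set.mem_univ _, fun _ c b1 b2 => ?_⟩, fun h c hc => ?_⟩
  · dsimp only
    split_ifs
    · exact hmove1 c b1 b2
    · exact hmove1 c b2 b1
  · rw [step_spec i σ _ h c _ _ rfl rfl]
    have hmv : mv (1 - i) (M := advMech V) ⟨bid,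
        fun _ c b => if WinGood E i (U c) c b b then 1 - i else i,
        fun _ c b1 b2 => if i = 0 then move c b1 b2 else move c b2 b1⟩ h c (bid h c) (σ.bid h c)
        = move c (σ.bid h c) (bid h c) := by
      unfold mv; fin_cases i <;> rfl
    have hedge : E c.v (mv i σ h c (σ.bid h c) (bid h c)) := by
      unfold mv; split_ifs <;> exact hσ.2.2 h c _ _
    have hg := hbid2 h c hc
    rw [hmv]
    dsimp only
    refine iteInduction (motive := (· ∉ U c)) (fun hcond => ?_) (fun hcond => ?_)
    · refine fun hm => (show ¬ WinGood E i (U c) c (σ.bid h c) (bid h c) from ?_) ⟨_, hedge, hm⟩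
      intro hw
      rcases hcond with hlt | ⟨heq, hch⟩
      · exact hg ⟨fun _ => hw, fun h => absurd h hlt.not_gt, fun h => absurd h hlt.ne⟩
      · by_cases hs : c.s = i
        · exact hg ⟨fun _ => hw, fun h => absurd heq h.ne', fun _ =>
            ⟨fun _ => Or.inl hw, fun h => absurd hs h⟩⟩
        · rw [heq] at hw
          rw [if_neg hs, if_pos hw] at hch
          exact hne hch
    · refine hmove2 c _ _ fun hl => hg ?_
      rcases lt_trichotomy (bid h c) (σ.bid h c) with hlt | heq | hlt
      · exact absurd (Or.inl hlt) hcond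
      · refine ⟨fun h => absurd heq h.ne, fun _ => hl, fun _ => ⟨fun _ => Or.inr hl, fun hs => ?_⟩⟩
        refine ⟨?_, hl⟩
        by_contra hw
        rw [heq] at hw
        exact hcond (Or.inr ⟨heq, by rw [if_neg hs, if_neg hw]⟩)
      · exact ⟨fun h => absurd h hlt.not_gt, fun _ => hl, fun h => absurd h hlt.ne'⟩

/-! ### Winning regions -/

/-- If along a play every point of `L` off the target is followed by a point of `L` of smaller
rank, then a play that starts in `L` reaches the target. -/
lemma reach_of_rank {X : Type} {L S : Set X} {r : X → Ordinal.{0}} (p : ℕ → X)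
    (hp : ∀ n, p n ∈ L → p n ∉ S → p (n + 1) ∈ L ∧ r (p (n + 1)) < r (p n)) (h0 : p 0 ∈ L) :
    ∃ n, p n ∈ S := by
  by_contra! hn
  have hL : ∀ n, p n ∈ L := fun n => by
    induction n with
    | zero => exact h0
    | succ n ih => exact (hp n ih (hn n)).1
  exact (RelEmbedding.natGT (r := (· < ·)) (fun n => r (p n))
    (fun n => (hp n (hL n) (hn n)).2)).not_wellFounded (wellFounded_lt)

/-- For Player 1 the winning region is the least fixed point of `U ↦ T ∪ CPre 0 U`: he wins inside
it by decreasing the rank, and loses outside it because any strategy can be kept outside. -/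
lemma hasWin_mono0 {c c' : Conf V (Fin 2)} (hcc : Better 0 c c')
    (h : HasWin (advG E hsucc N T) 0 c) : HasWin (advG E hsucc N T) 0 c' := by
  let F : Set (Conf V (Fin 2)) → Set (Conf V (Fin 2)) := fun U => {c | c.v ∈ T} ∪ CPre E 0 U
  have hF : Monotone F := fun U U' hU => Set.union_subset_union_right _ (cpre_mono E 0 hU)
  obtain ⟨L, r, hL1, hL2⟩ := exists_rank F hF
  have up : L ⊆ {c | ∀ c', Better 0 c c' → c' ∈ L} := by
    refine rank_induction hF hL2 ?_
    rintro x (hx | hx) y hxy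
    · exact hL1 (Or.inl (show y.v ∈ T from hxy.1 ▸ hx))
    · refine hL1 (Or.inr (cpre_mono E 0 (a := {c | ∀ c', Better 0 c c' → c' ∈ L})
        (fun z hz => hz z (Better.refl _ _)) (cpre_up hsucc ?_ hxy hx)))
      exact fun z w hzw hz u hu => hz u (hzw.trans hu)
  have hcL : c ∈ L := by
    by_contra hcL
    obtain ⟨σ, hσ, hw⟩ := h
    obtain ⟨τ, hτ, hs⟩ := spoil 0 (fun _ => L) σ hσ
    have hn : ∀ n, (playAux (advG E hsucc N T) σ τ c n).2 ∉ L := by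
      intro n
      induction n with
      | zero => exact hcL
      | succ n ih => exact hs _ _ (fun hx => ih (hL1 (Or.inr hx)))
    obtain ⟨n, hnT⟩ := hw τ hτ
    exact hn n (hL1 (Or.inl hnT))
  have hcL' : c' ∈ L := up hcL c' hcc
  obtain ⟨σ, hσ, hs⟩ := follow (E := E) (hsucc := hsucc) (N := N) (T := T) 0
    (fun c => {c' | c' ∈ L ∧ r c' < r c})
  refine ⟨σ, hσ, fun τ hτ => ?_⟩
  exact reach_of_rank (S := {c : Conf V (Fin 2) | c.v ∈ T}) (fun n => (playAux (advG E hsucc N T) σ τ c' n).2)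
    (fun n hn hT => hs τ hτ _ _ ((hL2 _ hn).resolve_left hT)) hcL'

/-- For Player 2 the winning region is the complement of a least fixed point: outside it he can
stay outside, and inside it any strategy of his can be driven to the target by decreasing the
rank. -/
lemma hasWin_mono1 {c c' : Conf V (Fin 2)} (hcc : Better 1 c c')
    (h : HasWin (advG E hsucc N T) 1 c) : HasWin (advG E hsucc N T) 1 c' := by
  -- `L` is the set of configurations from which Player 2 cannot avoid the target.
  let F : Set (Conf V (Fin 2)) → Set (Conf V (Fin 2)) := fun U => {c | c.v ∈ T} ∪ (CPre E 1 Uᶜ)ᶜ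
  have hF : Monotone F := fun U U' hU => Set.union_subset_union_right _
    (Set.compl_subset_compl.2 (cpre_mono E 1 (Set.compl_subset_compl.2 hU)))
  obtain ⟨L, r, hL1, hL2⟩ := exists_rank F hF
  have down : L ⊆ {c' | ∀ c, Better 1 c c' → c ∈ L} := by
    refine rank_induction hF hL2 ?_
    rintro y (hy | hy) x hxy
    · exact hL1 (Or.inl (show x.v ∈ T from hxy.1 ▸ hy))
    · refine hL1 (hF (a := {c' | ∀ c, Better 1 c c' → c ∈ L}) (fun z hz => hz z (Better.refl _ _))
        (Or.inr fun hx => hy (cpre_up hsucc ?_ hxy hx)))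
      exact fun z w hzw hz hw => hz fun u hu => hw u (hu.trans hzw)
  have hcL : c ∉ L := by
    intro hcL
    obtain ⟨σ, hσ, hw⟩ := h
    obtain ⟨τ, hτ, hs⟩ := spoil 1 (fun c => {c' | c' ∈ L ∧ r c' < r c}ᶜ) σ hσ
    refine hw τ hτ ?_
    exact reach_of_rank (S := {c : Conf V (Fin 2) | c.v ∈ T}) (fun n => (playAux (advG E hsucc N T) τ σ c n).2)
      (fun n hn hT => not_not.1 (hs _ _ ((hL2 _ hn).resolve_left hT))) hcL
  have hcL' : c' ∉ L := fun hx => hcL (down hx c hcc)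
  obtain ⟨σ, hσ, hs⟩ := follow (E := E) (hsucc := hsucc) (N := N) (T := T) 1 (fun _ => Lᶜ)
  refine ⟨σ, hσ, fun τ hτ => ?_⟩
  have hn : ∀ n, (playAux (advG E hsucc N T) τ σ c' n).2 ∉ L := by
    intro n
    induction n with
    | zero => exact hcL'
    | succ n ih => exact hs τ hτ _ _ (by_contra fun hx => ih (hL1 (Or.inr hx)))
  rintro ⟨n, hnT⟩
  exact hn n (hL1 (Or.inl hnT))

/-- A configuration that is better for player `i` than one he wins is also won by him. -/
lemma hasWin_mono (i : Fin 2) {c c' : Conf V (Fin 2)} (hcc : Better i c c')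
    (h : HasWin (advG E hsucc N T) i c) : HasWin (advG E hsucc N T) i c' := by
  match i with
  | 0 => exact hasWin_mono0 hcc h
  | 1 => exact hasWin_mono1 hcc h

end

end Bid

open Bid in
/-- In a discrete reachability bidding game with
advantage-based tie-breaking (the state `s : Fin 2` records the advantage
holder, `0` for Player 1 and `1` for Player 2):
(1) holding the advantage is advantageous — if Player `i` wins from
`⟨v,B1,B2,1-i⟩` then he wins from `⟨v,B1,B2,i⟩`; and
(2) the advantage can be replaced by a unit of budget — if Player 1 wins from
`⟨v,B1,B2,1⟩` (with the advantage) and `B2 ≥ 1` then he wins from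
`⟨v,B1+1,B2-1,2⟩`, and if Player 2 wins from `⟨v,B1,B2,2⟩` and `B1 ≥ 1` then
he wins from `⟨v,B1-1,B2+1,1⟩`. -/
theorem stmt_15 {V : Type} [Fintype V] (E : V → V → Prop)
    (hsucc : ∀ v, ∃ u, E v u) (N : ℕ) (T : Set V) :
    let G : Game V := ⟨E, hsucc, N, advMech V, fun p => ∃ n, p n ∈ T⟩
    (∀ (i : Fin 2) (v : V) (B1 B2 : ℕ), B1 + B2 = N →
        HasWin G i (⟨v, B1, B2, 1 - i⟩ : Conf V (Fin 2)) →
          HasWin G i (⟨v, B1, B2, i⟩ : Conf V (Fin 2))) ∧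
    (∀ (v : V) (B1 B2 : ℕ), B1 + B2 = N → 1 ≤ B2 →
        HasWin G 0 (⟨v, B1, B2, 0⟩ : Conf V (Fin 2)) →
          HasWin G 0 (⟨v, B1 + 1, B2 - 1, 1⟩ : Conf V (Fin 2))) ∧
    (∀ (v : V) (B1 B2 : ℕ), B1 + B2 = N → 1 ≤ B1 →
        HasWin G 1 (⟨v, B1, B2, 1⟩ : Conf V (Fin 2)) →
          HasWin G 1 (⟨v, B1 - 1, B2 + 1, 0⟩ : Conf V (Fin 2))) := by
  refine ⟨fun i v B1 B2 _ h => ?_, fun v B1 B2 _ hB h => ?_, fun v B1 B2 _ hB h => ?_⟩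
  · have hsame : ∀ j s, budget j (⟨v, B1, B2, s⟩ : Conf V (Fin 2)) = if j = 0 then B1 else B2 :=
      fun _ _ => rfl
    exact hasWin_mono i (c := ⟨v, B1, B2, 1 - i⟩)
      ⟨rfl, by simp only [hsame], Or.inr ⟨by simp only [hsame], fun _ => rfl⟩⟩ h
  · refine hasWin_mono 0 (c := ⟨v, B1, B2, 0⟩) ⟨rfl, ?_, Or.inl ?_⟩ h
    · simp only [budget]; simp; omega
    · simp [budget]
  · refine hasWin_mono 1 (c := ⟨v, B1, B2, 1⟩) ⟨rfl, ?_, Or.inl ?_⟩ h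
    · simp only [budget]; simp; omega
    · simp [budget]
end

section
/- Let G be a discrete reachability bidding game with advantage-based tie-breaking and let c = ⟨v, B1, B2, 1⟩ be a configuration in which Player 1 holds the advantage. Then: (i) for every i with 1 ≤ i ≤ min(B1, B2), if M_c(i−1, i) = 2 and M_c(i, i−1) = 2, then M_c(i, i) = 2; (ii) for every i with i ≤ B2 and i + 1 ≤ B1, if M_c(i, i) = 2, then M_c(i+1, i) = 2. -/
namespace Bid

/-! ### `G_1` as a least fixed point -/

section Fixpoint

variable {V : Type} (G : Game V)

/-- `AfterWin` with the winning configurations of `G_1` replaced by an arbitrary predicate `P`. -/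
def After (P : Conf V G.M.S → Prop) (c : Conf V G.M.S) (b1 b2 : ℕ) (tie : Bool)
    (w : Fin 2) : Prop :=
  if w = 0 then ∃ d, G.E c.v d ∧ P (nextConf G c b1 b2 tie w d)
  else ∀ d, G.E c.v d → P (nextConf G c b1 b2 tie w d)

/-- `PosWin1` with the winning configurations of `G_1` replaced by an arbitrary predicate `P`. -/
def Pos (P : Conf V G.M.S → Prop) (c : Conf V G.M.S) (b1 b2 : ℕ) : Prop :=
  if b1 = b2 then
    if G.M.chooser c.s = 0 then ∃ w ∈ G.M.opts c.s, After G P c b1 b2 true w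
    else ∀ w ∈ G.M.opts c.s, After G P c b1 b2 true w
  else After G P c b1 b2 false (if b2 < b1 then 0 else 1)

/-- One step of the attractor computation: the configurations from which Player 1 is already in
`T`, or can force the next configuration to satisfy `P` by a bid that Player 2 sees. -/
def Step (T : Set V) (P : Conf V G.M.S → Prop) (c : Conf V G.M.S) : Prop :=
  c.v ∈ T ∨ ∃ b ≤ c.B1, ∀ b2 ≤ c.B2, Pos G P c b b2

variable {G}

theorem After.mono {P Q : Conf V G.M.S → Prop} (h : ∀ c, P c → Q c) {c : Conf V G.M.S}
    {b1 b2 : ℕ} {tie : Bool} {w : Fin 2} (hP : After G P c b1 b2 tie w) :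
    After G Q c b1 b2 tie w := by
  unfold After at *
  split_ifs at * with hw
  · obtain ⟨d, hd, hp⟩ := hP
    exact ⟨d, hd, h _ hp⟩
  · exact fun d hd => h _ (hP d hd)

theorem Pos.mono {P Q : Conf V G.M.S → Prop} (h : ∀ c, P c → Q c) {c : Conf V G.M.S}
    {b1 b2 : ℕ} (hP : Pos G P c b1 b2) : Pos G Q c b1 b2 := by
  unfold Pos at *
  split_ifs at * with h1 h2
  · obtain ⟨w, hw, hp⟩ := hP
    exact ⟨w, hw, hp.mono h⟩
  · exact fun w hw => (hP w hw).mono h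
  · exact hP.mono h
  · exact hP.mono h

theorem Step.mono {T : Set V} {P Q : Conf V G.M.S → Prop} (h : ∀ c, P c → Q c)
    {c : Conf V G.M.S} (hP : Step G T P c) : Step G T Q c := by
  rcases hP with hP | ⟨b, hb, hP⟩
  · exact Or.inl hP
  · exact Or.inr ⟨b, hb, fun b2 h2 => (hP b2 h2).mono h⟩

/-- The bidding winner of a round in which both players' tie decisions are fixed. -/
theorem winner_cases (b1 b2 : ℕ) (w : Fin 2) :
    (b1 ≠ b2 ∧ (if b2 < b1 then (0 : Fin 2) else if b1 < b2 then 1 else w)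
        = if b2 < b1 then 0 else 1) ∨
    (b1 = b2 ∧ (if b2 < b1 then (0 : Fin 2) else if b1 < b2 then 1 else w) = w) := by
  rcases lt_trichotomy b1 b2 with h | h | h
  · left
    simp [h, h.ne]
  · right
    simp [h]
  · left
    simp [h, h.ne']

/-- Player 2 can stay forever outside `P` if `P` is closed under `Step`: the winning
configurations of `G_1` are contained in every such `P`. -/
theorem of_p1Wins {T : Set V} (hobj : ∀ p, G.obj p ↔ ∃ n, p n ∈ T)
    {P : Conf V G.M.S → Prop} (hP : ∀ c, Step G T P c → P c) {c : Conf V G.M.S}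
    (hc : P1WinsFirst G c) : P c := by
  classical
  by_contra hnP
  obtain ⟨σ, ⟨hσb, hσc, hσm⟩, hσ⟩ := hc
  have hbid : ∀ (c : Conf V G.M.S) (b : ℕ), ∃ b2 ≤ c.B2,
      (∃ b2 ≤ c.B2, ¬ Pos G P c b b2) → ¬ Pos G P c b b2 := by
    intro c b
    by_cases h : ∃ b2 ≤ c.B2, ¬ Pos G P c b b2
    · obtain ⟨b2, h2, h3⟩ := h
      exact ⟨b2, h2, fun _ => h3⟩
    · exact ⟨0, Nat.zero_le _, fun h' => absurd h' h⟩
  have hch : ∀ (c : Conf V G.M.S) (b : ℕ), ∃ w ∈ G.M.opts c.s,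
      (∃ w ∈ G.M.opts c.s, ¬ After G P c b b true w) → ¬ After G P c b b true w := by
    intro c b
    by_cases h : ∃ w ∈ G.M.opts c.s, ¬ After G P c b b true w
    · obtain ⟨w, h2, h3⟩ := h
      exact ⟨w, h2, fun _ => h3⟩
    · obtain ⟨w, hw⟩ := G.M.opts_nonempty c.s
      exact ⟨w, hw, fun h' => absurd h' h⟩
  have hmv : ∀ (c : Conf V G.M.S) (b1 b2 : ℕ), ∃ d, G.E c.v d ∧
      ((∃ d, G.E c.v d ∧ ¬ P (nextConf G c b1 b2 (decide (b1 = b2)) 1 d)) →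
        ¬ P (nextConf G c b1 b2 (decide (b1 = b2)) 1 d)) := by
    intro c b1 b2
    by_cases h : ∃ d, G.E c.v d ∧ ¬ P (nextConf G c b1 b2 (decide (b1 = b2)) 1 d)
    · obtain ⟨d, h2, h3⟩ := h
      exact ⟨d, h2, fun _ => h3⟩
    · obtain ⟨d, hd⟩ := G.succ_exists c.v
      exact ⟨d, hd, fun h' => absurd h' h⟩
  choose fb hfb hfb' using hbid
  choose fc hfc hfc' using hch
  choose fm hfm hfm' using hmv
  let τ : RespStrat V G.M :=
    ⟨fun _ c b => fb c b, fun _ c b => fc c b, fun _ c b1 b2 => fm c b1 b2⟩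
  have hτ : RespLegal G τ := ⟨fun _ c b => hfb c b, fun _ c b => hfc c b,
    fun _ c b1 b2 => hfm c b1 b2⟩
  have inv : ∀ n, ¬ P (playFirstAux G σ τ c n).2 := by
    intro n
    induction n with
    | zero => exact hnP
    | succ n ih =>
      simp only [playFirstAux]
      generalize playFirstAux G σ τ c n = p at ih
      obtain ⟨h, e⟩ := p
      have hns : ¬ Step G T P e := fun hs => ih (hP _ hs)
      have h1 : ∃ b2 ≤ e.B2, ¬ Pos G P e (σ.bid h e) b2 := by
        by_contra hcon
        push Not at hcon
        have hb : σ.bid h e ≤ e.B1 := by simpa [budget] using hσb h e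
        exact hns (Or.inr ⟨_, hb, hcon⟩)
      have h2 := hfb' e (σ.bid h e) h1
      -- whoever wins the bidding, the position before the move is bad for `P`
      have key : ∀ w, ¬ After G P e (σ.bid h e) (fb e (σ.bid h e))
          (decide (σ.bid h e = fb e (σ.bid h e))) w →
          ¬ P (nextConf G e (σ.bid h e) (fb e (σ.bid h e))
            (decide (σ.bid h e = fb e (σ.bid h e))) w
            (if w = 0 then σ.move h e (σ.bid h e) (fb e (σ.bid h e))
              else fm e (σ.bid h e) (fb e (σ.bid h e)))) := by
        intro w hw
        unfold After at hw
        by_cases hw0 : w = 0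
        · subst hw0
          simp only [if_true] at hw ⊢
          exact fun hp => hw ⟨_, hσm _ _ _ _, hp⟩
        · have hw1 : w = 1 := by omega
          subst hw1
          rw [if_neg hw0] at hw ⊢
          push Not at hw
          exact hfm' e _ _ hw
      apply key
      change ¬ After G P e (σ.bid h e) (fb e (σ.bid h e)) _
        (if fb e (σ.bid h e) < σ.bid h e then (0 : Fin 2)
          else if σ.bid h e < fb e (σ.bid h e) then 1
          else if G.M.chooser e.s = 0 then σ.choice h e (σ.bid h e) else fc e (σ.bid h e))
      rcases winner_cases (σ.bid h e) (fb e (σ.bid h e))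
        (if G.M.chooser e.s = 0 then σ.choice h e (σ.bid h e) else fc e (σ.bid h e))
        with ⟨hne, hw⟩ | ⟨heq, hw⟩
      · rw [hw]
        simpa [Pos, hne] using h2
      · rw [hw]
        unfold Pos at h2
        rw [if_pos heq] at h2
        rw [← heq] at h2 ⊢
        simp only [decide_true]
        split_ifs at h2 ⊢ with hs
        · exact fun ha => h2 ⟨_, hσc _ _ _, ha⟩
        · push Not at h2
          exact hfc' e _ h2
  obtain ⟨n, hn⟩ := (hobj _).1 (hσ τ hτ)
  exact inv n (hP _ (Or.inl hn))

/-- The configuration at which a play with history `h` and current configuration `c` started. -/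
def startConf {S : Type} (h : Hist V S) (c : Conf V S) : Conf V S :=
  match h with
  | [] => c
  | r :: _ => r.1

/-- The strategy that plays the first round as `σ0` and from then on follows `S c1`, where `c1`
is the configuration reached after the first round. -/
def graft (σ0 : Strat V G.M) (S : Conf V G.M.S → Strat V G.M) : Strat V G.M where
  bid h c := match h with
    | [] => σ0.bid [] c
    | _ :: h' => (S (startConf h' c)).bid h' c
  choice h c b := match h with
    | [] => σ0.choice [] c b
    | _ :: h' => (S (startConf h' c)).choice h' c b
  move h c b1 b2 := match h with
    | [] => σ0.move [] c b1 b2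
    | _ :: h' => (S (startConf h' c)).move h' c b1 b2

/-- The response strategy `τ` as it continues after a first round `r`. -/
def shift (r : Round V G.M.S) (τ : RespStrat V G.M) : RespStrat V G.M where
  bid h := τ.bid (r :: h)
  choice h := τ.choice (r :: h)
  move h := τ.move (r :: h)

theorem play_graft (σ0 : Strat V G.M) (S : Conf V G.M.S → Strat V G.M) (τ : RespStrat V G.M)
    (c c1 : Conf V G.M.S) (r : Round V G.M.S)
    (h1 : stepPlayFirst G (graft σ0 S) τ ([], c) = ([r], c1)) (n : ℕ) :
    playFirstAux G (graft σ0 S) τ c (n + 1) =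
        (r :: (playFirstAux G (S c1) (shift r τ) c1 n).1,
          (playFirstAux G (S c1) (shift r τ) c1 n).2) ∧
      startConf (playFirstAux G (S c1) (shift r τ) c1 n).1
        (playFirstAux G (S c1) (shift r τ) c1 n).2 = c1 := by
  induction n with
  | zero => exact ⟨h1, rfl⟩
  | succ n ih =>
    obtain ⟨ih1, ih2⟩ := ih
    rw [playFirstAux, ih1, playFirstAux]
    generalize playFirstAux G (S c1) (shift r τ) c1 n = p at ih2
    obtain ⟨h, e⟩ := p
    simp only at ih2
    constructor
    · simp only [stepPlayFirst, graft, shift, ih2, List.cons_append]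
      rfl
    · cases h with
      | nil => exact ih2
      | cons a l => exact ih2

theorem exists_legal (G : Game V) : ∃ σ : Strat V G.M, Legal G 0 σ := by
  choose f hf using G.succ_exists
  choose g hg using G.M.opts_nonempty
  exact ⟨⟨fun _ _ => 0, fun _ c _ => g c.s, fun _ c _ _ => f c.v⟩,
    fun _ _ => Nat.zero_le _, fun _ c _ => hg c.s, fun _ c _ _ => hf c.v⟩

/-- The winning configurations of `G_1` are closed under `Step`. -/
theorem p1Wins_of_step {T : Set V} (hobj : ∀ p, G.obj p ↔ ∃ n, p n ∈ T) {c : Conf V G.M.S}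
    (hc : Step G T (P1WinsFirst G) c) : P1WinsFirst G c := by
  classical
  rcases hc with hT | ⟨b, hb, hpos⟩
  · obtain ⟨σ, hσ⟩ := exists_legal G
    exact ⟨σ, hσ, fun τ _ => (hobj _).2 ⟨0, hT⟩⟩
  have hS : ∀ e : Conf V G.M.S, ∃ σ : Strat V G.M, Legal G 0 σ ∧
      (P1WinsFirst G e → ∀ τ, RespLegal G τ → G.obj (pathFirst G σ τ e)) := by
    intro e
    by_cases h : P1WinsFirst G e
    · obtain ⟨σ, h1, h2⟩ := h
      exact ⟨σ, h1, fun _ => h2⟩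
    · obtain ⟨σ, hσ⟩ := exists_legal G
      exact ⟨σ, hσ, fun h' => absurd h' h⟩
  have hch : ∀ (c : Conf V G.M.S) (b : ℕ), ∃ w ∈ G.M.opts c.s,
      (∃ w ∈ G.M.opts c.s, AfterWin G c b b true w) → AfterWin G c b b true w := by
    intro c b
    by_cases h : ∃ w ∈ G.M.opts c.s, AfterWin G c b b true w
    · obtain ⟨w, h2, h3⟩ := h
      exact ⟨w, h2, fun _ => h3⟩
    · obtain ⟨w, hw⟩ := G.M.opts_nonempty c.s
      exact ⟨w, hw, fun h' => absurd h' h⟩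
  have hmv : ∀ (c : Conf V G.M.S) (b1 b2 : ℕ), ∃ d, G.E c.v d ∧
      ((∃ d, G.E c.v d ∧ P1WinsFirst G (nextConf G c b1 b2 (decide (b1 = b2)) 0 d)) →
        P1WinsFirst G (nextConf G c b1 b2 (decide (b1 = b2)) 0 d)) := by
    intro c b1 b2
    by_cases h : ∃ d, G.E c.v d ∧ P1WinsFirst G (nextConf G c b1 b2 (decide (b1 = b2)) 0 d)
    · obtain ⟨d, h2, h3⟩ := h
      exact ⟨d, h2, fun _ => h3⟩
    · obtain ⟨d, hd⟩ := G.succ_exists c.v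
      exact ⟨d, hd, fun h' => absurd h' h⟩
  choose S hS1 hS2 using hS
  choose fc hfc hfc' using hch
  choose fm hfm hfm' using hmv
  -- the truncation by `e.B1` only serves legality at configurations other than `c`
  let σ0 : Strat V G.M :=
    ⟨fun _ e => min b e.B1, fun _ e b => fc e b, fun _ e b1 b2 => fm e b1 b2⟩
  refine ⟨graft σ0 S, ⟨?_, ?_, ?_⟩, ?_⟩
  · intro h e
    cases h with
    | nil => simp [graft, σ0, budget]
    | cons r h => exact (hS1 _).1 _ _
  · intro h e b
    cases h with
    | nil => exact hfc _ _
    | cons r h => exact (hS1 _).2.1 _ _ _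
  · intro h e b1 b2
    cases h with
    | nil => exact hfm _ _ _
    | cons r h => exact (hS1 _).2.2 _ _ _ _
  intro τ hτ
  obtain ⟨r, c1, hr⟩ : ∃ r c1, stepPlayFirst G (graft σ0 S) τ ([], c) = ([r], c1) :=
    ⟨_, _, rfl⟩
  have hwin : P1WinsFirst G c1 := by
    have hc1 : c1 = (stepPlayFirst G (graft σ0 S) τ ([], c)).2 := by rw [hr]
    have hmin : min b c.B1 = b := min_eq_left hb
    have h2 := hpos (τ.bid [] c b) (hτ.1 _ _ _)
    rw [hc1]
    simp only [stepPlayFirst, graft, σ0, hmin]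
    have key : ∀ w, After G (P1WinsFirst G) c b (τ.bid [] c b)
        (decide (b = τ.bid [] c b)) w →
        P1WinsFirst G (nextConf G c b (τ.bid [] c b) (decide (b = τ.bid [] c b)) w
          (if w = 0 then fm c b (τ.bid [] c b) else τ.move [] c b (τ.bid [] c b))) := by
      intro w hw
      unfold After at hw
      by_cases hw0 : w = 0
      · subst hw0
        simp only [if_true] at hw ⊢
        exact hfm' _ _ _ hw
      · rw [if_neg hw0] at hw ⊢
        exact hw _ (hτ.2.2 _ _ _ _)
    apply key
    rcases winner_cases b (τ.bid [] c b)
      (if G.M.chooser c.s = 0 then fc c b else τ.choice [] c b) with ⟨hne, hw⟩ | ⟨heq, hw⟩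
    · rw [hw]
      simpa [Pos, hne] using h2
    · rw [hw]
      unfold Pos at h2
      rw [if_pos heq] at h2
      rw [← heq] at h2 ⊢
      simp only [decide_true]
      split_ifs at h2 ⊢ with hs
      · exact hfc' _ _ h2
      · exact h2 _ (hτ.2.1 _ _ _)
  obtain ⟨n, hn⟩ := (hobj _).1 (hS2 c1 hwin (shift r τ)
    ⟨fun h => hτ.1 (r :: h), fun h => hτ.2.1 (r :: h), fun h => hτ.2.2 (r :: h)⟩)
  refine (hobj _).2 ⟨n + 1, ?_⟩
  simp only [pathFirst] at hn ⊢
  rwa [(play_graft σ0 S τ c c1 r hr n).1]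

end Fixpoint

/-! ### Monotonicity under advantage-based tie-breaking -/

section Advantage

variable {V : Type}

/-- The reachability game with target `T` and advantage-based tie-breaking. -/
abbrev advGame (E : V → V → Prop) (hsucc : ∀ v, ∃ u, E v u) (N : ℕ) (T : Set V) : Game V :=
  ⟨E, hsucc, N, advMech V, fun p => ∃ n, p n ∈ T⟩

/-- An elementary improvement for Player 1 at a fixed vertex and total budget: receiving the
advantage, or receiving one unit of budget in exchange for the advantage. -/
inductive Better_s16 : Conf V (Fin 2) → Conf V (Fin 2) → Prop
  | adv (v : V) (k m : ℕ) : Better_s16 ⟨v, k, m, 1⟩ ⟨v, k, m, 0⟩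
  | trade (v : V) (k m : ℕ) : Better_s16 ⟨v, k, m + 1, 0⟩ ⟨v, k + 1, m, 1⟩

variable {E : V → V → Prop} {hsucc : ∀ v, ∃ u, E v u} {N : ℕ} {T : Set V}

theorem pos_lt (P : Conf V (Fin 2) → Prop) (v : V) (k m : ℕ) (s : Fin 2) {b1 b2 : ℕ}
    (h : b2 < b1) : Pos (advGame E hsucc N T) P ⟨v, k, m, s⟩ b1 b2 ↔
      ∃ d, E v d ∧ P ⟨d, k - b1, m + b1, s⟩ := by
  simp [Pos, After, h, h.ne', nextConf, advMech]

theorem pos_gt (P : Conf V (Fin 2) → Prop) (v : V) (k m : ℕ) (s : Fin 2) {b1 b2 : ℕ}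
    (h : b1 < b2) : Pos (advGame E hsucc N T) P ⟨v, k, m, s⟩ b1 b2 ↔
      ∀ d, E v d → P ⟨d, k + b2, m - b2, s⟩ := by
  simp [Pos, After, h.ne, h.not_gt, nextConf, advMech]

theorem pos_tie_zero (P : Conf V (Fin 2) → Prop) (v : V) (k m b : ℕ) :
    Pos (advGame E hsucc N T) P ⟨v, k, m, (0 : Fin 2)⟩ b b ↔
      (∃ d, E v d ∧ P ⟨d, k - b, m + b, 1⟩) ∨ ∀ d, E v d → P ⟨d, k + b, m - b, 0⟩ := by
  simp [Pos, After, nextConf, advMech, Fin.exists_fin_two]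

theorem pos_tie_one (P : Conf V (Fin 2) → Prop) (v : V) (k m b : ℕ) :
    Pos (advGame E hsucc N T) P ⟨v, k, m, (1 : Fin 2)⟩ b b ↔
      (∃ d, E v d ∧ P ⟨d, k - b, m + b, 1⟩) ∧ ∀ d, E v d → P ⟨d, k + b, m - b, 0⟩ := by
  simp [Pos, After, nextConf, advMech, Fin.forall_fin_two]

/-- If `P` is preserved by elementary improvements, then so is `Step P`; the witness is that
Player 1's bid remains good after the improvement. -/
theorem step_better {P : Conf V (Fin 2) → Prop} (hP : ∀ c c', Better_s16 c c' → P c → P c')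
    {c c' : Conf V (Fin 2)} (hcc : Better_s16 c c') (h : Step (advGame E hsucc N T) T P c) :
    Step (advGame E hsucc N T) T P c' := by
  have hadv : ∀ {v k m}, P ⟨v, k, m, 1⟩ → P ⟨v, k, m, 0⟩ := fun h => hP _ _ (.adv ..) h
  have htr : ∀ {v k m}, P ⟨v, k, m + 1, 0⟩ → P ⟨v, k + 1, m, 1⟩ := fun h => hP _ _ (.trade ..) h
  cases hcc with
  | adv v k m =>
    rcases h with h | ⟨b, hb, h⟩
    · exact Or.inl h
    refine Or.inr ⟨b, hb, fun b2 h2 => ?_⟩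
    have h3 := h b2 h2
    rcases lt_trichotomy b b2 with hlt | rfl | hlt
    · replace h3 := (pos_gt _ _ _ _ _ hlt).1 h3
      refine (pos_gt _ _ _ _ _ hlt).2 ?_
      exact fun d hd => hadv (h3 d hd)
    · exact (pos_tie_zero ..).2 (Or.inl ((pos_tie_one ..).1 h3).1)
    · replace h3 := (pos_lt _ _ _ _ _ hlt).1 h3
      refine (pos_lt _ _ _ _ _ hlt).2 ?_
      obtain ⟨d, hd, hp⟩ := h3
      exact ⟨d, hd, hadv hp⟩
  | trade v k m =>
    rcases h with h | ⟨b, hb, h⟩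
    · exact Or.inl h
    simp only at hb h
    -- what Player 1 gets when he wins: Player 2's answer `0` tests it
    have hwin : ∃ d, E v d ∧ P ⟨d, k + 1 - b, m + b, 1⟩ := by
      have h0 := h 0 (Nat.zero_le _)
      rcases Nat.eq_zero_or_pos b with rfl | hpos
      · rcases (pos_tie_zero ..).1 h0 with ⟨d, hd, hp⟩ | h0
        · exact ⟨d, hd, htr (hadv hp)⟩
        · obtain ⟨d, hd⟩ := hsucc v
          exact ⟨d, hd, htr (h0 d hd)⟩
      · obtain ⟨d, hd, hp⟩ := (pos_lt _ _ _ _ _ hpos).1 h0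
        refine ⟨d, hd, ?_⟩
        rw [Nat.sub_add_comm hb]
        apply htr
        rwa [Nat.add_right_comm]
    refine Or.inr ⟨b, Nat.le_succ_of_le hb, fun b2 h2 => ?_⟩
    simp only at h2
    rcases lt_trichotomy b b2 with hlt | rfl | hlt
    · have h3 := h b2 (by omega)
      replace h3 := (pos_gt _ _ _ _ _ hlt).1 h3
      refine (pos_gt _ _ _ _ _ hlt).2 ?_
      intro d hd
      have h4 := h3 d hd
      rw [Nat.sub_add_comm h2] at h4
      rw [Nat.add_right_comm]
      exact htr h4
    · refine (pos_tie_one ..).2 ⟨hwin, fun d hd => ?_⟩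
      -- a tie taken by Player 2 compares with his answer `b + 1` before the trade
      have h3 := h (b + 1) (by omega)
      have h4 := (pos_gt _ _ _ _ _ (Nat.lt_add_one b)).1 h3 d hd
      rwa [Nat.add_sub_add_right, ← Nat.add_assoc, Nat.add_right_comm] at h4
    · exact (pos_lt _ _ _ _ _ hlt).2 hwin

theorem p1Wins_better {c c' : Conf V (Fin 2)} (hcc : Better_s16 c c')
    (h : P1WinsFirst (advGame E hsucc N T) c) : P1WinsFirst (advGame E hsucc N T) c' := by
  have hobj : ∀ p, (advGame E hsucc N T).obj p ↔ ∃ n, p n ∈ T := fun _ => Iff.rfl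
  let P : Conf V (Fin 2) → Prop := fun c =>
    ∀ c', Relation.ReflTransGen Better_s16 c c' → P1WinsFirst (advGame E hsucc N T) c'
  have hup : ∀ c c', Better_s16 c c' → P c → P c' := fun _ _ h hp e he => hp e (.head h he)
  have hclosed : ∀ c, Step (advGame E hsucc N T) T P c → P c := by
    intro c hs c' hr
    have hs' : Step (advGame E hsucc N T) T P c' := by
      induction hr with
      | refl => exact hs
      | tail _ hb ih => exact step_better hup hb ih
    exact p1Wins_of_step hobj (hs'.mono fun e he => he e .refl)
  exact of_p1Wins hobj hclosed h c' (.single hcc)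

end Advantage

theorem mc_eq_two {V : Type} (G : Game V) (c : Conf V G.M.S) (b1 b2 : ℕ) :
    Mc G c b1 b2 = 2 ↔ ¬ Pos G (P1WinsFirst G) c b1 b2 := by
  change _ ↔ ¬ PosWin1 G c b1 b2
  unfold Mc
  split_ifs with h <;> simp [h]

end Bid

open Bid in
/-- In a discrete reachability bidding game with
advantage-based tie-breaking, for a configuration `c` in which Player 1 holds
the advantage (`c.s = 0`):
(i) for `1 ≤ i ≤ min(B1,B2)`, if `M_c(i-1,i) = 2` and `M_c(i,i-1) = 2`, then
`M_c(i,i) = 2`; and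
(ii) for `i ≤ B2` and `i+1 ≤ B1`, if `M_c(i,i) = 2` then `M_c(i+1,i) = 2`. -/
theorem stmt_16 {V : Type} [Fintype V] (E : V → V → Prop)
    (hsucc : ∀ v, ∃ u, E v u) (N : ℕ) (T : Set V) :
    let G : Game V := ⟨E, hsucc, N, advMech V, fun p => ∃ n, p n ∈ T⟩
    ∀ c : Conf V (Fin 2), c.B1 + c.B2 = N → c.s = 0 →
      (∀ i : ℕ, 1 ≤ i → i ≤ min c.B1 c.B2 →
          Mc G c (i - 1) i = 2 → Mc G c i (i - 1) = 2 → Mc G c i i = 2) ∧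
      (∀ i : ℕ, i ≤ c.B2 → i + 1 ≤ c.B1 →
          Mc G c i i = 2 → Mc G c (i + 1) i = 2) := by
  intro G c _ hs
  obtain ⟨v, k, m, s⟩ := c
  obtain rfl : s = 0 := hs
  refine ⟨fun i hi1 hi h1 h2 => ?_, fun i hi2 hi1 h => ?_⟩
  · have h1 := mt (pos_gt _ _ _ _ _ (by omega)).2 ((mc_eq_two _ _ _ _).1 h1)
    have h2 := mt (pos_lt _ _ _ _ _ (by omega)).2 ((mc_eq_two _ _ _ _).1 h2)
    refine (mc_eq_two _ _ _ _).2 (mt (pos_tie_zero ..).1 ?_)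
    rintro (⟨d, hd, hp⟩ | hp)
    · exact h2 ⟨d, hd, p1Wins_better (.adv ..) hp⟩
    · exact h1 hp
  · have h := mt (pos_tie_zero ..).2 ((mc_eq_two _ _ _ _).1 h)
    refine (mc_eq_two _ _ _ _).2 (mt (pos_lt _ _ _ _ _ (Nat.lt_succ_self i)).1 ?_)
    rintro ⟨d, hd, hp⟩
    refine h (Or.inl ⟨d, hd, ?_⟩)
    have hk : k - i = k - (i + 1) + 1 := by
      simp only at hi1
      omega
    rw [hk]
    exact p1Wins_better (.trade ..) hp
end
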